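/- Uniqueness for the coupled parabolic system with mixed boundary conditions: if ρ̂₁ and ρ̂₂ are two weak solutions in (L²([0,T],H¹(Λ)))² of ∂_t ρ̂ = ∇·(∇ρ̂ − (1/2)Σ(ρ̂)(Ê + 2∇Ĥ)) on Λ = (−1,1)×𝕋^{d−1}, with ρ̂ = b̂ on Γ⁻, ∂_{e₁}ρ̂ = (1/2)Σ(ρ̂)(Ê₁ + 2∂_{e₁}Ĥ) on Γ⁺, taking values in [−1,1]×[0,1], and the same initial data γ̂, then ρ̂₁ = ρ̂₂ a.e. The proof uses the spectral expansion in the eigenbasis (V_n), the Lipschitz continuity of the entries of Σ on the compact [−1,1]×[0,1], and Grönwall's inequality applied to G(t) = ‖ρ̂₁(t) − ρ̂₂(t)‖²_{L²}. -/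

import Mathlib

open MeasureTheory Set Matrix

/-- The open cylinder `Λ = (−1,1) × 𝕋^{d}` (total dimension `d+1`), represented
by the fundamental domain `(−1,1) × [0,1)^{d}` in `ℝ^{d+1}`. -/
def cylDomain (d : ℕ) : Set (Fin (d + 1) → ℝ) :=
  {x | -1 < x 0 ∧ x 0 < 1 ∧ ∀ i, i ≠ 0 → 0 ≤ x i ∧ x i < 1}

/-- The mobility matrix `Σ(m,φ)`. -/
noncomputable def SigmaBC (a : Fin 2 → ℝ) : Matrix (Fin 2) (Fin 2) ℝ :=
  (2 : ℝ) • !![a 1 - a 0 ^ 2, a 0 * (1 - a 1); a 0 * (1 - a 1), a 1 * (1 - a 1)]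

/-- Scalar test functions in `C_c^∞((0,T)×Λ)`. -/
def TestScalar (d : ℕ) (T : ℝ) (ψ : ℝ → (Fin (d + 1) → ℝ) → ℝ) : Prop :=
  ContDiff ℝ (⊤ : ℕ∞) (fun p : ℝ × (Fin (d + 1) → ℝ) => ψ p.1 p.2) ∧
  (∀ (t : ℝ) (x : Fin (d + 1) → ℝ) (i : Fin (d + 1)), i ≠ 0 →
    ψ t (x + Pi.single i 1) = ψ t x) ∧
  ∃ ε : ℝ, 0 < ε ∧ ∀ (t : ℝ) (x : Fin (d + 1) → ℝ),
    (t ≤ ε ∨ T - ε ≤ t ∨ x 0 ≤ -1 + ε ∨ 1 - ε ≤ x 0) → ψ t x = 0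

/-- Test functions of class `C^{1,2}_{0,−}([0,T]×Λ̄)` (with values in `ℝ²`):
smooth, periodic in the torus directions, vanishing on the left boundary `Γ⁻`. -/
def TestBdry (d : ℕ) (G : ℝ → (Fin (d + 1) → ℝ) → Fin 2 → ℝ) : Prop :=
  ContDiff ℝ 2 (fun p : ℝ × (Fin (d + 1) → ℝ) => G p.1 p.2) ∧
  (∀ (t : ℝ) (x : Fin (d + 1) → ℝ) (i : Fin (d + 1)), i ≠ 0 →
    G t (x + Pi.single i 1) = G t x) ∧
  (∀ (t : ℝ) (x : Fin (d + 1) → ℝ), x 0 = -1 → G t x = 0)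

/-- `(ρ, g, τ)` is a weak solution of the boundary-driven perturbed system
`∂_t ρ̂ = ∇·(∇ρ̂ − ½Σ(ρ̂)(Ê + 2∇Ĥ))`, with Dirichlet data `b̂` on `Γ⁻`, Neumann
data `∂₁ρ̂ = ½Σ(ρ̂)(Ê₁ + 2∂₁Ĥ)` on `Γ⁺` and initial data `γ̂`.  Here `g` is the
weak spatial gradient of `ρ` and `τ` its trace on `Γ⁺` (characterized by the
Gauss–Green identity); surface integrals over `Γ^±` are written as `½ ∫_Λ` of
integrands independent of the first coordinate. -/
def IsWeakSolutionBC (d : ℕ) (T : ℝ)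
    (E : Fin (d + 1) → Fin 2 → ℝ) (H : ℝ → (Fin (d + 1) → ℝ) → Fin 2 → ℝ)
    (b γ : (Fin (d + 1) → ℝ) → Fin 2 → ℝ)
    (ρ : ℝ → (Fin (d + 1) → ℝ) → Fin 2 → ℝ)
    (g : Fin (d + 1) → ℝ → (Fin (d + 1) → ℝ) → Fin 2 → ℝ)
    (τ : ℝ → (Fin (d + 1) → ℝ) → Fin 2 → ℝ) : Prop :=
  -- measurability and pointwise bounds `ρ̂ ∈ [−1,1] × [0,1]`
  Measurable (fun p : ℝ × (Fin (d + 1) → ℝ) => ρ p.1 p.2) ∧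
  (∀ t x, ρ t x 0 ∈ Set.Icc (-1 : ℝ) 1 ∧ ρ t x 1 ∈ Set.Icc (0 : ℝ) 1) ∧
  -- `g` is the weak spatial gradient of `ρ`, square integrable
  (∀ k, Measurable (fun p : ℝ × (Fin (d + 1) → ℝ) => g k p.1 p.2)) ∧
  (∀ (k : Fin (d + 1)) (i : Fin 2) (ψ : ℝ → (Fin (d + 1) → ℝ) → ℝ), TestScalar d T ψ →
    ∫ p in (Set.Ioo 0 T ×ˢ cylDomain d),
        ρ p.1 p.2 i * fderiv ℝ (ψ p.1) p.2 (Pi.single k 1) =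
      -∫ p in (Set.Ioo 0 T ×ˢ cylDomain d), g k p.1 p.2 i * ψ p.1 p.2) ∧
  Integrable (fun p : ℝ × (Fin (d + 1) → ℝ) => ∑ k, ∑ i : Fin 2, g k p.1 p.2 i ^ 2)
    (volume.restrict (Set.Ioo 0 T ×ˢ cylDomain d)) ∧
  -- `τ` is the trace of `ρ` on `Γ⁺`: it is independent of the first coordinate,
  -- and satisfies the Gauss–Green identity against test functions vanishing on `Γ⁻`
  Measurable (fun p : ℝ × (Fin (d + 1) → ℝ) => τ p.1 p.2) ∧
  (∀ (t : ℝ) (x : Fin (d + 1) → ℝ) (c : ℝ), τ t (Function.update x 0 c) = τ t x) ∧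
  (∀ (i : Fin 2) (ψ : ℝ → (Fin (d + 1) → ℝ) → ℝ),
    ContDiff ℝ 1 (fun p : ℝ × (Fin (d + 1) → ℝ) => ψ p.1 p.2) →
    (∀ (t : ℝ) (x : Fin (d + 1) → ℝ) (j : Fin (d + 1)), j ≠ 0 →
      ψ t (x + Pi.single j 1) = ψ t x) →
    (∀ (t : ℝ) (x : Fin (d + 1) → ℝ), x 0 = -1 → ψ t x = 0) →
    ∫ p in (Set.Ioo 0 T ×ˢ cylDomain d),
        (ρ p.1 p.2 i * fderiv ℝ (ψ p.1) p.2 (Pi.single 0 1) + g 0 p.1 p.2 i * ψ p.1 p.2) =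
      (1 / 2) * ∫ p in (Set.Ioo 0 T ×ˢ cylDomain d),
        τ p.1 p.2 i * ψ p.1 (Function.update p.2 0 1)) ∧
  -- the weak formulation `ℓ_G^{Ê,Ĥ}(ρ̂ | γ̂) = 0` for all admissible test functions
  (∀ G : ℝ → (Fin (d + 1) → ℝ) → Fin 2 → ℝ, TestBdry d G →
    ((∫ x in cylDomain d, ∑ i : Fin 2, ρ T x i * G T x i)
      - (∫ x in cylDomain d, ∑ i : Fin 2, γ x i * G 0 x i)
      - (∫ p in (Set.Ioo 0 T ×ˢ cylDomain d),
          ∑ i : Fin 2, ρ p.1 p.2 i * deriv (fun s => G s p.2 i) p.1)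
      - (∫ p in (Set.Ioo 0 T ×ˢ cylDomain d),
          ∑ i : Fin 2, ρ p.1 p.2 i *
            ∑ k, fderiv ℝ (fun y => fderiv ℝ (fun z => G p.1 z i) y (Pi.single k 1)) p.2
              (Pi.single k 1))
      - (1 / 2) * (∫ p in (Set.Ioo 0 T ×ˢ cylDomain d),
          ∑ i : Fin 2, b p.2 i *
            fderiv ℝ (fun y => G p.1 y i) (Function.update p.2 0 (-1)) (Pi.single 0 1))
      + (1 / 2) * (∫ p in (Set.Ioo 0 T ×ˢ cylDomain d),
          ∑ i : Fin 2, τ p.1 p.2 i *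
            fderiv ℝ (fun y => G p.1 y i) (Function.update p.2 0 1) (Pi.single 0 1))
      - (1 / 2) * (∫ p in (Set.Ioo 0 T ×ˢ cylDomain d),
          ∑ k, (fun i => fderiv ℝ (fun y => G p.1 y i) p.2 (Pi.single k 1)) ⬝ᵥ
            (SigmaBC (ρ p.1 p.2)).mulVec
              (fun i => E k i + 2 * fderiv ℝ (fun y => H p.1 y i) p.2 (Pi.single k 1)))) = 0)

/-!
The difference of two solutions solves, in each component, a heat equation with zero initial data,
homogeneous mixed boundary conditions and a source `-div F`, where `F` is the difference of the
transport fluxes. Testing with the Dirichlet–Neumann eigenfunctions of the Laplacian turns this into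
one linear ODE per mode, which is solved by Duhamel's formula. Cauchy–Schwarz in time absorbs the
frequency produced by the divergence, because `λ ∫₀ˢ e^{-2λ(s-t)} dt ≤ 1/2`. Summing over the modes
with Parseval's identity for the eigenfunctions and Bessel's inequality for their normalized partial
derivatives bounds `‖ρ̂₁(s) - ρ̂₂(s)‖²` by `∫₀ˢ ‖F(t)‖² dt`, hence by a multiple of
`∫₀ˢ ‖ρ̂₁(t) - ρ̂₂(t)‖² dt` since `Σ` is Lipschitz on `[-1,1] × [0,1]`, and Grönwall's inequality
concludes. Parseval and Bessel both come from the Fourier basis of a torus: reflecting the cylinder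
across its Neumann face, with a phase twist, turns the eigenfunctions into characters.
-/

/-- Measurable functions that are bounded in norm. On finite measure spaces they are stable under
all the operations performed on the solutions (products, slices, partial integrals). -/
structure BddMeasurable {X F : Type*} [MeasurableSpace X] [NormedAddCommGroup F]
    [MeasurableSpace F] (f : X → F) : Prop where
  measurable : Measurable f
  bounded : ∃ C, ∀ x, ‖f x‖ ≤ C

namespace BddMeasurable

variable {X Y F : Type*} [MeasurableSpace X] [MeasurableSpace Y]

section Normed

variable [NormedAddCommGroup F] [MeasurableSpace F]

lemma comp {f : X → F} (hf : BddMeasurable f) {φ : Y → X} (hφ : Measurable φ) :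
    BddMeasurable fun y => f (φ y) :=
  ⟨hf.measurable.comp hφ, hf.bounded.imp fun _ hC y => hC (φ y)⟩

lemma slice {f : X × Y → F} (hf : BddMeasurable f) (x : X) : BddMeasurable fun y => f (x, y) :=
  hf.comp measurable_prodMk_left

lemma eval {ι : Type*} [Fintype ι] {G : ι → Type*} [∀ i, NormedAddCommGroup (G i)]
    [∀ i, MeasurableSpace (G i)] {f : X → ∀ i, G i} (hf : BddMeasurable f) (i : ι) :
    BddMeasurable fun x => f x i :=
  ⟨measurable_pi_iff.1 hf.measurable i,
    hf.bounded.imp fun _ hC x => (norm_le_pi_norm (f x) i).trans (hC x)⟩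

lemma sub [MeasurableSub₂ F] {f g : X → F} (hf : BddMeasurable f) (hg : BddMeasurable g) :
    BddMeasurable fun x => f x - g x := by
  obtain ⟨C, hC⟩ := hf.bounded
  obtain ⟨D, hD⟩ := hg.bounded
  exact ⟨hf.measurable.sub hg.measurable, C + D, fun x => norm_sub_le_of_le (hC x) (hD x)⟩

lemma memLp [BorelSpace F] [SecondCountableTopology F] {f : X → F} (hf : BddMeasurable f)
    (p : ENNReal) (μ : Measure X) [IsFiniteMeasure μ] : MemLp f p μ :=
  let ⟨C, hC⟩ := hf.bounded
  .of_bound hf.measurable.aestronglyMeasurable C (.of_forall hC)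

lemma integrable [BorelSpace F] [SecondCountableTopology F] {f : X → F} (hf : BddMeasurable f)
    (μ : Measure X) [IsFiniteMeasure μ] : Integrable f μ :=
  memLp_one_iff_integrable.1 (hf.memLp 1 μ)

lemma intervalIntegrable [BorelSpace F] [SecondCountableTopology F] {f : ℝ → F}
    (hf : BddMeasurable f) (a b : ℝ) :
    IntervalIntegrable f volume a b :=
  ⟨hf.integrable _, hf.integrable _⟩

end Normed

lemma mul [NormedRing F] [MeasurableSpace F] [MeasurableMul₂ F] {f g : X → F}
    (hf : BddMeasurable f) (hg : BddMeasurable g) : BddMeasurable fun x => f x * g x := by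
  obtain ⟨C, hC⟩ := hf.bounded
  obtain ⟨D, hD⟩ := hg.bounded
  exact ⟨hf.measurable.mul hg.measurable, C * D, fun x => norm_mul_le_of_le (hC x) (hD x)⟩

lemma sq {f : X → ℝ} (hf : BddMeasurable f) : BddMeasurable fun x => f x ^ 2 := by
  simpa only [pow_two] using hf.mul hf

lemma sum {ι : Type*} {s : Finset ι} {f : ι → X → ℝ} (hf : ∀ i, BddMeasurable (f i)) :
    BddMeasurable fun x => ∑ i ∈ s, f i x := by
  choose C hC using fun i => (hf i).bounded
  exact ⟨Finset.measurable_fun_sum _ fun i _ => (hf i).measurable, ∑ i ∈ s, C i,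
    fun x => norm_sum_le_of_le _ fun i _ => hC i x⟩

lemma integral_prod_right {f : X × Y → ℝ} (hf : BddMeasurable f) (ν : Measure Y)
    [IsFiniteMeasure ν] : BddMeasurable fun x => ∫ y, f (x, y) ∂ν := by
  obtain ⟨C, hC⟩ := hf.bounded
  exact ⟨hf.measurable.stronglyMeasurable.integral_prod_right'.measurable, C * ν.real univ,
    fun x => norm_integral_le_of_norm_le_const (.of_forall fun y => hC (x, y))⟩

lemma locallyIntegrable {f : ℝ → ℝ} (hf : BddMeasurable f) : LocallyIntegrable f :=
  locallyIntegrable_iff.2 fun k hk => by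
    have : IsFiniteMeasure (volume.restrict k) := ⟨by simpa using hk.measure_lt_top⟩
    exact hf.integrable _

lemma integrable_continuous_fst_mul {f : ℝ × X → ℝ} (hf : BddMeasurable f) {ν : Measure X}
    [IsFiniteMeasure ν] {a b : ℝ} {ψ : ℝ → ℝ} (hψ : Continuous ψ) :
    Integrable (fun p => ψ p.1 * f p) ((volume.restrict (Ioo a b)).prod ν) := by
  obtain ⟨C, hC⟩ := hf.bounded
  have hψi : IntegrableOn ψ (Ioo a b) := hψ.integrableOn_Icc.mono_set Ioo_subset_Icc_self
  exact (hψi.comp_fst ν).mul_bdd hf.measurable.aestronglyMeasurable (.of_forall hC)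

end BddMeasurable

lemma sq_integral_sum_mul_le {α κ : Type*} [MeasurableSpace α] {μ : Measure α} [Fintype κ]
    {f g : κ → α → ℝ} (hf : ∀ k, MemLp (f k) 2 μ) (hg : ∀ k, MemLp (g k) 2 μ)
    (hf1 : ∫ x, ∑ k, f k x ^ 2 ∂μ ≤ 1) :
    (∫ x, ∑ k, f k x * g k x ∂μ) ^ 2 ≤ ∫ x, ∑ k, g k x ^ 2 ∂μ := by
  set I := ∫ x, ∑ k, f k x * g k x ∂μ
  have hf2 : Integrable (fun x => ∑ k, f k x ^ 2) μ :=
    integrable_finsetSum _ fun k _ => (hf k).integrable_sq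
  have hg2 : Integrable (fun x => ∑ k, g k x ^ 2) μ :=
    integrable_finsetSum _ fun k _ => (hg k).integrable_sq
  have hfg : Integrable (fun x => ∑ k, f k x * g k x) μ :=
    integrable_finsetSum _ fun k _ => (hf k).integrable_mul (hg k)
  have hsquare : 0 ≤ ∫ x, ∑ k, (I * f k x - g k x) ^ 2 ∂μ :=
    integral_nonneg fun x => Finset.sum_nonneg fun k _ => sq_nonneg _
  have hexpand : ∫ x, ∑ k, (I * f k x - g k x) ^ 2 ∂μ =
      I ^ 2 * ∫ x, ∑ k, f k x ^ 2 ∂μ - 2 * I * I + ∫ x, ∑ k, g k x ^ 2 ∂μ := by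
    have hsub : Integrable
        (fun x => I ^ 2 * ∑ k, f k x ^ 2 - 2 * I * ∑ k, f k x * g k x) μ :=
      (hf2.const_mul _).sub (hfg.const_mul _)
    rw [← integral_const_mul, ← integral_const_mul, ← integral_sub (hf2.const_mul _)
      (hfg.const_mul _), ← integral_add hsub hg2]
    refine integral_congr_ae (.of_forall fun x => ?_)
    simp only [Finset.mul_sum, ← Finset.sum_sub_distrib, ← Finset.sum_add_distrib]
    exact Finset.sum_congr rfl fun k _ => by ring
  nlinarith [mul_le_mul_of_nonneg_left hf1 (sq_nonneg I)]

/-! ### Linear evolution on an interval -/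

section OneDimensional

variable {a b : ℝ}

lemma integral_Ioo_eq_intervalIntegral (hab : a ≤ b) (f : ℝ → ℝ) :
    ∫ t in Ioo a b, f t = ∫ t in a..b, f t := by
  rw [intervalIntegral.integral_of_le hab, integral_Ioc_eq_integral_Ioo]

/- Only an a.e. bound on `y` is available, so the differential form of Grönwall's inequality is
applied to the second primitive of `y`, which is differentiable everywhere. -/
lemma ae_eq_zero_of_le_mul_integral {K : ℝ} {y : ℝ → ℝ} (hy : LocallyIntegrable y)
    (hy0 : ∀ t, 0 ≤ y t) (hK : 0 ≤ K)
    (h : ∀ᵐ s ∂volume.restrict (Ioo a b), y s ≤ K * ∫ t in a..s, y t) :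
    ∀ᵐ s ∂volume.restrict (Ioo a b), y s = 0 := by
  have hyi (r s : ℝ) : IntervalIntegrable y volume r s :=
    (hy.integrableOn_isCompact isCompact_uIcc).intervalIntegrable
  set Y : ℝ → ℝ := fun s => ∫ t in a..s, y t
  set Z : ℝ → ℝ := fun s => ∫ t in a..s, Y t
  have hYcont : Continuous Y := intervalIntegral.continuous_primitive hyi a
  have hZderiv (s : ℝ) : HasDerivAt Z (Y s) s := hYcont.integral_hasStrictDerivAt a s |>.hasDerivAt
  have hY0 {s : ℝ} (hs : a ≤ s) : 0 ≤ Y s :=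
    intervalIntegral.integral_nonneg hs fun t _ => hy0 t
  have hZ0 {s : ℝ} (hs : a ≤ s) : 0 ≤ Z s :=
    intervalIntegral.integral_nonneg hs fun t ht => hY0 ht.1
  have hYZ {s : ℝ} (hs : s ∈ Icc a b) : Y s ≤ K * Z s := by
    rw [← intervalIntegral.integral_const_mul]
    refine intervalIntegral.integral_mono_ae_restrict hs.1 (hyi a s)
      ((hYcont.const_mul K).intervalIntegrable a s) ?_
    rw [← Measure.restrict_congr_set Ioo_ae_eq_Icc]
    exact ae_restrict_of_ae_restrict_of_subset (Ioo_subset_Ioo_right hs.2) h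
  have hZ : ∀ s ∈ Icc a b, Z s = 0 := by
    refine eq_zero_of_abs_deriv_le_mul_abs_self_of_eq_zero_right (f' := Y) (K := K)
      (fun s _ => (hZderiv s).continuousAt.continuousWithinAt)
      (fun s _ => (hZderiv s).hasDerivWithinAt) intervalIntegral.integral_same fun s hs => ?_
    rw [Real.norm_of_nonneg (hY0 hs.1), Real.norm_of_nonneg (hZ0 hs.1)]
    exact hYZ (Ico_subset_Icc_self hs)
  filter_upwards [h, ae_restrict_mem measurableSet_Ioo] with s hs hsab
  have hYs : Y s ≤ 0 := by
    simpa [hZ s (Ioo_subset_Icc_self hsab)] using hYZ (Ioo_subset_Icc_self hsab)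
  exact le_antisymm (hs.trans (mul_nonpos_of_nonneg_of_nonpos hK hYs)) (hy0 s)

lemma integral_primitive_mul_deriv {v φ : ℝ → ℝ} (hv : IntervalIntegrable v volume a b)
    (hφ : ContDiff ℝ 1 φ) (hφb : φ b = 0) :
    ∫ t in a..b, (∫ r in a..t, v r) * deriv φ t = -∫ t in a..b, v t * φ t := by
  rw [(hv.absolutelyContinuousOnInterval_intervalIntegral left_mem_uIcc
      ).integral_mul_deriv_eq_deriv_mul hφ.contDiffOn.absolutelyContinuousOnInterval,
    hφb, intervalIntegral.integral_same, mul_zero, zero_mul, sub_zero, zero_sub, neg_inj]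
  refine intervalIntegral.integral_congr_ae ?_
  filter_upwards [hv.ae_hasDerivAt_integral] with t ht htab
  rw [(ht (uIoc_subset_uIcc htab) a left_mem_uIcc).deriv]

lemma exists_contDiff_two_deriv_eq {θ : ℝ → ℝ} (hθ : ContDiff ℝ 1 θ) (b : ℝ) :
    ∃ φ : ℝ → ℝ, ContDiff ℝ 2 φ ∧ φ b = 0 ∧ deriv φ = θ := by
  have hderiv (t : ℝ) : HasDerivAt (fun t => ∫ r in b..t, θ r) (θ t) t :=
    (hθ.continuous.integral_hasStrictDerivAt b t).hasDerivAt
  have hderiv_eq : deriv (fun t => ∫ r in b..t, θ r) = θ := funext fun t => (hderiv t).deriv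
  refine ⟨fun t => ∫ r in b..t, θ r, ?_, intervalIntegral.integral_same, hderiv_eq⟩
  rw [show (2 : WithTop ℕ∞) = 1 + 1 by norm_num, contDiff_succ_iff_deriv, hderiv_eq]
  exact ⟨fun t => (hderiv t).differentiableAt, by simp, hθ⟩

lemma ae_eq_integral_of_forall_contDiff {u v : ℝ → ℝ} (hu : IntegrableOn u (Ioo a b))
    (hv : IntegrableOn v (Ioo a b))
    (h : ∀ φ : ℝ → ℝ, ContDiff ℝ 2 φ → φ b = 0 →
      ∫ t in Ioo a b, (u t * deriv φ t + v t * φ t) = 0) :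
    ∀ᵐ s ∂volume.restrict (Ioo a b), u s = ∫ t in a..s, v t := by
  rcases le_or_gt b a with hba | hab
  · simp [Ioo_eq_empty hba.not_gt]
  have hvi : IntervalIntegrable v volume a b :=
    (intervalIntegrable_iff_integrableOn_Ioo_of_le hab.le).2 hv
  set V : ℝ → ℝ := fun s => ∫ t in a..s, v t
  have hV : ContinuousOn V (Icc a b) := by
    simpa only [uIcc_of_le hab.le] using
      intervalIntegral.continuousOn_primitive_interval' hvi left_mem_uIcc
  have hmul {f φ : ℝ → ℝ} (hf : IntegrableOn f (Ioo a b)) (hφ : Continuous φ) :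
      IntegrableOn (fun t => f t * φ t) (Ioo a b) := by
    rw [← integrableOn_Icc_iff_integrableOn_Ioo] at hf ⊢
    exact hf.mul_continuousOn hφ.continuousOn isCompact_Icc
  have hVi : IntegrableOn V (Ioo a b) := hV.integrableOn_Icc.mono_set Ioo_subset_Icc_self
  have hzero : ∀ᵐ s, s ∈ Ioo a b → u s - V s = 0 := by
    refine isOpen_Ioo.ae_eq_zero_of_integral_contDiff_smul_eq_zero
      (f := fun s => u s - V s) (hu.sub hVi).locallyIntegrableOn fun θ hθ _ hθs => ?_
    obtain ⟨φ, hφ, hφb, rfl⟩ :=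
      exists_contDiff_two_deriv_eq (hθ.of_le (by exact_mod_cast le_top)) b
    have hparts : ∫ t in Ioo a b, V t * deriv φ t = -∫ t in Ioo a b, v t * φ t := by
      simpa only [integral_Ioo_eq_intervalIntegral hab.le] using
        integral_primitive_mul_deriv hvi (hφ.of_le one_le_two) hφb
    have hweak := h φ hφ hφb
    rw [integral_add (hmul hu hθ.continuous) (hmul hv hφ.continuous)] at hweak
    rw [← setIntegral_eq_integral_of_forall_compl_eq_zero (s := Ioo a b) fun t ht => by
      simp [image_eq_zero_of_notMem_tsupport fun h => ht (hθs h)]]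
    calc ∫ t in Ioo a b, deriv φ t • (u t - V t)
        = ∫ t in Ioo a b, (u t * deriv φ t - V t * deriv φ t) := by
          simp only [smul_eq_mul, mul_comm (deriv φ _), sub_mul]
      _ = 0 := by
          rw [integral_sub (hmul hu hθ.continuous) (hmul hVi hθ.continuous), hparts]
          linarith
  rw [ae_restrict_iff' measurableSet_Ioo]
  filter_upwards [hzero] with s hs hsab using sub_eq_zero.1 (hs hsab)

lemma ae_eq_duhamel_of_forall_contDiff (l : ℝ) {c f : ℝ → ℝ} (hc : IntegrableOn c (Ioo a b))
    (hf : IntegrableOn f (Ioo a b))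
    (h : ∀ φ : ℝ → ℝ, ContDiff ℝ 2 φ → φ b = 0 →
      ∫ t in Ioo a b, (c t * (deriv φ t - l * φ t) + f t * φ t) = 0) :
    ∀ᵐ s ∂volume.restrict (Ioo a b), c s = ∫ t in a..s, Real.exp (-(l * (s - t))) * f t := by
  have hexp : Continuous fun t => Real.exp (l * t) := by fun_prop
  have hexp_deriv (t : ℝ) : HasDerivAt (fun t => Real.exp (l * t)) (Real.exp (l * t) * l) t := by
    simpa using ((hasDerivAt_id t).const_mul l).exp
  have hmul {g : ℝ → ℝ} (hg : IntegrableOn g (Ioo a b)) :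
      IntegrableOn (fun t => Real.exp (l * t) * g t) (Ioo a b) := by
    rw [← integrableOn_Icc_iff_integrableOn_Ioo] at hg ⊢
    exact hg.continuousOn_mul hexp.continuousOn isCompact_Icc
  -- the integrating factor `exp (l * t)` reduces to the case `l = 0`
  have hprim := ae_eq_integral_of_forall_contDiff (hmul hc) (hmul hf) fun φ hφ hφb => by
    have hφ' (t : ℝ) : HasDerivAt φ (deriv φ t) t :=
      (hφ.differentiable two_ne_zero t).hasDerivAt
    rw [← h (fun t => Real.exp (l * t) * φ t) (by fun_prop) (by simp [hφb])]
    congr! 2 with t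
    rw [((hexp_deriv t).fun_mul (hφ' t)).deriv]
    ring
  filter_upwards [hprim] with s hs
  have hinv : Real.exp (-(l * s)) * Real.exp (l * s) = 1 := by simp [← Real.exp_add]
  calc c s = Real.exp (-(l * s)) * (Real.exp (l * s) * c s) := by rw [← mul_assoc, hinv, one_mul]
    _ = ∫ t in a..s, Real.exp (-(l * s)) * (Real.exp (l * t) * f t) := by
        rw [hs, intervalIntegral.integral_const_mul]
    _ = ∫ t in a..s, Real.exp (-(l * (s - t))) * f t := by
        simp only [← mul_assoc, ← Real.exp_add]
        congr! 4
        ring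

lemma integral_mul_exp_sq_le_one (l s : ℝ) :
    ∫ t in a..s, l * Real.exp (-(l * (s - t))) ^ 2 ≤ 1 := by
  have hderiv (t : ℝ) : HasDerivAt (fun t => 1 / 2 * Real.exp (-(l * (s - t))) ^ 2)
      (l * Real.exp (-(l * (s - t))) ^ 2) t := by
    have hexponent : HasDerivAt (fun t => -(l * (s - t))) l t := by
      simpa using (((hasDerivAt_id t).const_sub s).const_mul l).fun_neg
    exact ((hexponent.exp.fun_pow 2).const_mul (1 / 2)).congr_deriv (by push_cast; ring)
  rw [intervalIntegral.integral_eq_sub_of_hasDerivAt (fun t _ => hderiv t)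
    (Continuous.intervalIntegrable (by fun_prop) _ _)]
  have := sq_nonneg (Real.exp (-(l * (s - a))))
  simp only [sub_self, mul_zero, neg_zero, Real.exp_zero]
  linarith

/- Parabolic smoothing: the unbounded frequencies `μ k` are absorbed by the heat kernel. -/
lemma sq_integral_heatKernel_mul_le {κ : Type*} [Fintype κ] (μ : κ → ℝ) {B : κ → ℝ → ℝ} {s : ℝ}
    (hs : a ≤ s) (hB : ∀ k, MemLp (B k) 2 (volume.restrict (Ioc a s))) :
    (∫ t in a..s, Real.exp (-((∑ k, μ k ^ 2) * (s - t))) * ∑ k, μ k * B k t) ^ 2 ≤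
      ∫ t in a..s, ∑ k, B k t ^ 2 := by
  set l := ∑ k, μ k ^ 2
  have hkernel (k : κ) : MemLp (fun t => Real.exp (-(l * (s - t))) * μ k) 2
      (volume.restrict (Ioc a s)) := by
    have hcont : Continuous fun t => Real.exp (-(l * (s - t))) * μ k := by fun_prop
    exact (memLp_two_iff_integrable_sq hcont.aestronglyMeasurable).2 (hcont.pow 2).integrableOn_Ioc
  have hnorm : ∫ t in Ioc a s, ∑ k, (Real.exp (-(l * (s - t))) * μ k) ^ 2 ≤ 1 := by
    rw [← intervalIntegral.integral_of_le hs]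
    refine le_of_eq_of_le ?_ (integral_mul_exp_sq_le_one (a := a) l s)
    simp only [mul_pow, ← Finset.mul_sum, mul_comm l, l]
  simpa only [intervalIntegral.integral_of_le hs, Finset.mul_sum, mul_assoc] using
    sq_integral_sum_mul_le hkernel hB hnorm

end OneDimensional

/-! ### Heat equations in an eigensystem -/

/-- Laplace eigenmodes `mode m` on `(X, ν)` whose `k`-th partial derivative is
`freq m k * gradMode m k`. Derivatives do not enter the axioms: all that matters is that the modes
form a tight frame of `L²(ν)` and that, for each direction `k`, the normalized derivatives
`gradMode m k` satisfy Bessel's inequality with the same constant. -/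
structure GradientEigensystem {X : Type*} [MeasurableSpace X] (ν : Measure X) (ι κ : Type*) where
  freq : ι → κ → ℝ
  mode : ι → X → ℝ
  gradMode : ι → κ → X → ℝ
  frameConst : ℝ
  bddMeasurable_mode : ∀ m, BddMeasurable (mode m)
  bddMeasurable_gradMode : ∀ m k, BddMeasurable (gradMode m k)
  frameConst_pos : 0 < frameConst
  hasSum_sq_integral_mul_mode : ∀ h : X → ℝ, BddMeasurable h →
    HasSum (fun m => (∫ x, h x * mode m x ∂ν) ^ 2) (frameConst * ∫ x, h x ^ 2 ∂ν)
  sum_sq_integral_mul_gradMode_le : ∀ h : X → ℝ, BddMeasurable h → ∀ (k : κ) (A : Finset ι),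
    ∑ m ∈ A, (∫ x, h x * gradMode m k x ∂ν) ^ 2 ≤ frameConst * ∫ x, h x ^ 2 ∂ν

namespace GradientEigensystem

variable {X ι κ : Type*} [MeasurableSpace X] {ν : Measure X}

lemma integrable_mul_mode [IsFiniteMeasure ν] (𝓔 : GradientEigensystem ν ι κ) {w : ℝ × X → ℝ}
    (hw : BddMeasurable w) (m : ι) {ψ : ℝ → ℝ} (hψ : Continuous ψ) (a b : ℝ) :
    Integrable (fun p => w p * (ψ p.1 * 𝓔.mode m p.2)) ((volume.restrict (Ioo a b)).prod ν) := by
  simpa only [mul_left_comm] using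
    (hw.mul ((𝓔.bddMeasurable_mode m).comp measurable_snd)).integrable_continuous_fst_mul hψ

variable [Fintype κ]

/-- The eigenvalue of `-Δ` on the mode `m`. -/
def eigenvalue (𝓔 : GradientEigensystem ν ι κ) (m : ι) : ℝ := ∑ k, 𝓔.freq m k ^ 2

/-- The integrand obtained from the weak form of `∂ₜ w = Δ w - div F` by testing against
`φ(t) * mode m x` and moving all derivatives onto the test function. -/
noncomputable def modeDensity (𝓔 : GradientEigensystem ν ι κ) (w : ℝ × X → ℝ)
    (F : κ → ℝ × X → ℝ) (m : ι) (φ : ℝ → ℝ) (p : ℝ × X) : ℝ :=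
  w p * ((deriv φ p.1 - 𝓔.eigenvalue m * φ p.1) * 𝓔.mode m p.2) +
    ∑ k, F k p * (φ p.1 * (𝓔.freq m k * 𝓔.gradMode m k p.2))

/-- The weak form on `(a, b)` of `∂ₜ w = Δ w - div F`, `w(a) = 0`, tested only against the separated
functions `φ(t) * mode m x` with `φ b = 0`. -/
def IsModewiseSolution (𝓔 : GradientEigensystem ν ι κ) (a b : ℝ) (w : ℝ × X → ℝ)
    (F : κ → ℝ × X → ℝ) : Prop :=
  ∀ (m : ι) (φ : ℝ → ℝ), ContDiff ℝ 2 φ → φ b = 0 →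
    ∫ p, 𝓔.modeDensity w F m φ p ∂((volume.restrict (Ioo a b)).prod ν) = 0

variable [IsFiniteMeasure ν] {𝓔 : GradientEigensystem ν ι κ} {a b : ℝ}

lemma integrable_sum_mul_gradMode {F : κ → ℝ × X → ℝ} (hF : ∀ k, BddMeasurable (F k)) (m : ι)
    {ψ : ℝ → ℝ} (hψ : Continuous ψ) :
    Integrable (fun p => ∑ k, F k p * (ψ p.1 * (𝓔.freq m k * 𝓔.gradMode m k p.2)))
      ((volume.restrict (Ioo a b)).prod ν) := by
  refine integrable_finsetSum _ fun k _ => ?_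
  have hFk := (hF k).mul ((𝓔.bddMeasurable_gradMode m k).comp measurable_snd)
  refine (hFk.integrable_continuous_fst_mul (hψ.mul continuous_const)).congr
    (.of_forall fun p => ?_) (f := fun p => ψ p.1 * 𝓔.freq m k * (F k p * 𝓔.gradMode m k p.2))
  ring

lemma integrable_modeDensity {w : ℝ × X → ℝ} {F : κ → ℝ × X → ℝ} (hw : BddMeasurable w)
    (hF : ∀ k, BddMeasurable (F k)) (m : ι) {φ : ℝ → ℝ} (hφ : ContDiff ℝ 2 φ) :
    Integrable (𝓔.modeDensity w F m φ) ((volume.restrict (Ioo a b)).prod ν) :=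
  (𝓔.integrable_mul_mode hw m (ψ := fun t => deriv φ t - 𝓔.eigenvalue m * φ t)
    ((hφ.continuous_deriv one_le_two).sub (continuous_const.mul hφ.continuous)) a b).add
    (integrable_sum_mul_gradMode hF m hφ.continuous)

lemma integral_modeDensity_eq_add {w : ℝ × X → ℝ} {F : κ → ℝ × X → ℝ} (hw : BddMeasurable w)
    (hF : ∀ k, BddMeasurable (F k)) (m : ι) {φ : ℝ → ℝ} (hφ : ContDiff ℝ 2 φ) :
    ∫ p, 𝓔.modeDensity w F m φ p ∂((volume.restrict (Ioo a b)).prod ν) =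
      (∫ p, w p * (deriv φ p.1 * 𝓔.mode m p.2) ∂((volume.restrict (Ioo a b)).prod ν)) +
      (∫ p, w p * (-(𝓔.eigenvalue m * φ p.1) * 𝓔.mode m p.2)
        ∂((volume.restrict (Ioo a b)).prod ν)) +
      ∫ p, ∑ k, F k p * (φ p.1 * (𝓔.freq m k * 𝓔.gradMode m k p.2))
        ∂((volume.restrict (Ioo a b)).prod ν) := by
  have htime := 𝓔.integrable_mul_mode hw m (hφ.continuous_deriv one_le_two) a b
  have hspace := 𝓔.integrable_mul_mode hw m (ψ := fun t => -(𝓔.eigenvalue m * φ t))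
    (continuous_const.mul hφ.continuous).neg a b
  have hflux := integrable_sum_mul_gradMode (𝓔 := 𝓔) (a := a) (b := b) hF m hφ.continuous
  rw [← integral_add htime hspace, ← integral_add (by exact htime.add hspace) hflux]
  refine integral_congr_ae (.of_forall fun p => ?_)
  simp only [modeDensity]
  ring

lemma integral_modeDensity_slice {w : ℝ × X → ℝ} {F : κ → ℝ × X → ℝ} (hw : BddMeasurable w)
    (hF : ∀ k, BddMeasurable (F k)) (m : ι) (φ : ℝ → ℝ) (t : ℝ) :
    ∫ x, 𝓔.modeDensity w F m φ (t, x) ∂ν =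
      (∫ x, w (t, x) * 𝓔.mode m x ∂ν) * (deriv φ t - 𝓔.eigenvalue m * φ t) +
        (∑ k, 𝓔.freq m k * ∫ x, F k (t, x) * 𝓔.gradMode m k x ∂ν) * φ t := by
  have hwm : Integrable (fun x => w (t, x) * 𝓔.mode m x) ν :=
    ((hw.slice t).mul (𝓔.bddMeasurable_mode m)).integrable ν
  have hFm (k : κ) : Integrable (fun x => F k (t, x) * 𝓔.gradMode m k x) ν :=
    (((hF k).slice t).mul (𝓔.bddMeasurable_gradMode m k)).integrable ν
  simp only [modeDensity, Finset.sum_mul, ← integral_const_mul, ← integral_mul_const]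
  rw [← integral_finsetSum _ fun k _ => ((hFm k).const_mul _).mul_const _, ← integral_add
    (hwm.mul_const _) (integrable_finsetSum _ fun k _ => ((hFm k).const_mul _).mul_const _)]
  refine integral_congr_ae (.of_forall fun x => congrArg₂ _ (by ring) ?_)
  exact Finset.sum_congr rfl fun k _ => by ring

lemma isModewiseSolution_sub {w₁ w₂ : ℝ × X → ℝ} {F₁ F₂ : κ → ℝ × X → ℝ}
    (hw₁ : BddMeasurable w₁) (hF₁ : ∀ k, BddMeasurable (F₁ k)) (hw₂ : BddMeasurable w₂)
    (hF₂ : ∀ k, BddMeasurable (F₂ k))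
    (h : ∀ (m : ι) (φ : ℝ → ℝ), ContDiff ℝ 2 φ → φ b = 0 →
      ∫ p, 𝓔.modeDensity w₁ F₁ m φ p ∂((volume.restrict (Ioo a b)).prod ν) =
        ∫ p, 𝓔.modeDensity w₂ F₂ m φ p ∂((volume.restrict (Ioo a b)).prod ν)) :
    𝓔.IsModewiseSolution a b (fun p => w₁ p - w₂ p) fun k p => F₁ k p - F₂ k p := by
  intro m φ hφ hφb
  rw [← sub_eq_zero.2 (h m φ hφ hφb), ← integral_sub (integrable_modeDensity hw₁ hF₁ m hφ)
    (integrable_modeDensity hw₂ hF₂ m hφ)]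
  refine integral_congr_ae (.of_forall fun p => ?_)
  simp only [modeDensity, sub_mul, Finset.sum_sub_distrib]
  ring

namespace IsModewiseSolution

section Scalar

variable {w : ℝ × X → ℝ} {F : κ → ℝ × X → ℝ}

lemma integral_coeff_eq_zero (h : 𝓔.IsModewiseSolution a b w F) (hw : BddMeasurable w)
    (hF : ∀ k, BddMeasurable (F k)) (m : ι) {φ : ℝ → ℝ} (hφ : ContDiff ℝ 2 φ) (hφb : φ b = 0) :
    ∫ t in Ioo a b, ((∫ x, w (t, x) * 𝓔.mode m x ∂ν) * (deriv φ t - 𝓔.eigenvalue m * φ t) +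
      (∑ k, 𝓔.freq m k * ∫ x, F k (t, x) * 𝓔.gradMode m k x ∂ν) * φ t) = 0 := by
  rw [← h m φ hφ hφb, integral_prod _ (integrable_modeDensity hw hF m hφ)]
  simp only [integral_modeDensity_slice hw hF]

lemma sq_coeff_le (h : 𝓔.IsModewiseSolution a b w F) (hw : BddMeasurable w)
    (hF : ∀ k, BddMeasurable (F k)) (m : ι) :
    ∀ᵐ s ∂volume.restrict (Ioo a b), (∫ x, w (s, x) * 𝓔.mode m x ∂ν) ^ 2 ≤
      ∫ t in a..s, ∑ k, (∫ x, F k (t, x) * 𝓔.gradMode m k x ∂ν) ^ 2 := by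
  have hc : BddMeasurable fun t => ∫ x, w (t, x) * 𝓔.mode m x ∂ν :=
    (hw.mul ((𝓔.bddMeasurable_mode m).comp measurable_snd)).integral_prod_right ν
  have hB (k : κ) : BddMeasurable fun t => ∫ x, F k (t, x) * 𝓔.gradMode m k x ∂ν :=
    ((hF k).mul ((𝓔.bddMeasurable_gradMode m k).comp measurable_snd)).integral_prod_right ν
  have hduhamel := ae_eq_duhamel_of_forall_contDiff (𝓔.eigenvalue m) (hc.integrable _)
    (integrable_finsetSum _ fun k _ => ((hB k).integrable _).const_mul (𝓔.freq m k))
    fun φ hφ hφb => h.integral_coeff_eq_zero hw hF m hφ hφb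
  filter_upwards [hduhamel, ae_restrict_mem measurableSet_Ioo] with s hs hsab
  rw [hs]
  exact sq_integral_heatKernel_mul_le (𝓔.freq m) hsab.1.le fun k => (hB k).memLp 2 _

lemma integral_sq_le [Countable ι] (h : 𝓔.IsModewiseSolution a b w F) (hw : BddMeasurable w)
    (hF : ∀ k, BddMeasurable (F k)) :
    ∀ᵐ s ∂volume.restrict (Ioo a b), ∫ x, w (s, x) ^ 2 ∂ν ≤
      ∫ t in a..s, ∑ k, ∫ x, F k (t, x) ^ 2 ∂ν := by
  have hB (m : ι) (k : κ) : BddMeasurable fun t => ∫ x, F k (t, x) * 𝓔.gradMode m k x ∂ν :=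
    ((hF k).mul ((𝓔.bddMeasurable_gradMode m k).comp measurable_snd)).integral_prod_right ν
  have hBsum (m : ι) :
      BddMeasurable fun t => ∑ k, (∫ x, F k (t, x) * 𝓔.gradMode m k x ∂ν) ^ 2 :=
    .sum fun k => (hB m k).sq
  have hF2 : BddMeasurable fun t => ∑ k, ∫ x, F k (t, x) ^ 2 ∂ν :=
    .sum fun k => (hF k).sq.integral_prod_right ν
  filter_upwards [ae_all_iff.2 (h.sq_coeff_le hw hF), ae_restrict_mem measurableSet_Ioo]
    with s hs hsab
  refine le_of_mul_le_mul_left ?_ 𝓔.frameConst_pos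
  refine hasSum_le_of_sum_le (𝓔.hasSum_sq_integral_mul_mode _ (hw.slice s))
    fun A => ?_
  calc ∑ m ∈ A, (∫ x, w (s, x) * 𝓔.mode m x ∂ν) ^ 2
      ≤ ∑ m ∈ A, ∫ t in a..s, ∑ k, (∫ x, F k (t, x) * 𝓔.gradMode m k x ∂ν) ^ 2 :=
        Finset.sum_le_sum fun m _ => hs m
    _ = ∫ t in a..s, ∑ m ∈ A, ∑ k, (∫ x, F k (t, x) * 𝓔.gradMode m k x ∂ν) ^ 2 :=
        (intervalIntegral.integral_finsetSum fun m _ => (hBsum m).intervalIntegrable a s).symm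
    _ ≤ ∫ t in a..s, 𝓔.frameConst * ∑ k, ∫ x, F k (t, x) ^ 2 ∂ν := by
        refine intervalIntegral.integral_mono hsab.1.le
          (BddMeasurable.sum hBsum |>.intervalIntegrable a s)
          ((hF2.intervalIntegrable a s).const_mul _) fun t => ?_
        rw [Finset.sum_comm, Finset.mul_sum]
        exact Finset.sum_le_sum fun k _ =>
          𝓔.sum_sq_integral_mul_gradMode_le _ ((hF k).slice t) k A
    _ = 𝓔.frameConst * ∫ t in a..s, ∑ k, ∫ x, F k (t, x) ^ 2 ∂ν :=
        intervalIntegral.integral_const_mul _ _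

end Scalar

theorem ae_eq_zero [Countable ι] {J : Type*} [Fintype J] {w : J → ℝ × X → ℝ}
    {F : J → κ → ℝ × X → ℝ} {K : ℝ} (h : ∀ j, 𝓔.IsModewiseSolution a b (w j) (F j))
    (hw : ∀ j, BddMeasurable (w j)) (hF : ∀ j k, BddMeasurable (F j k)) (hK : 0 ≤ K)
    (hFw : ∀ j k p, F j k p ^ 2 ≤ K * ∑ i, w i p ^ 2) :
    ∀ᵐ p ∂(volume.restrict (Ioo a b)).prod ν, ∀ j, w j p = 0 := by
  have hq : BddMeasurable fun p => ∑ j, w j p ^ 2 := .sum fun j => (hw j).sq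
  have hq0 (p : ℝ × X) : 0 ≤ ∑ j, w j p ^ 2 := Finset.sum_nonneg fun j _ => sq_nonneg _
  have hy : BddMeasurable fun t => ∫ x, ∑ j, w j (t, x) ^ 2 ∂ν := hq.integral_prod_right ν
  have hflux (j : J) (t : ℝ) : ∑ k, ∫ x, F j k (t, x) ^ 2 ∂ν ≤
      Fintype.card κ * K * ∫ x, ∑ i, w i (t, x) ^ 2 ∂ν := by
    rw [mul_assoc, ← nsmul_eq_mul]
    refine Finset.sum_le_card_nsmul _ _ _ fun k _ => ?_
    rw [← integral_const_mul]
    exact integral_mono (((hF j k).sq.slice t).integrable ν)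
      (((hq.slice t).integrable ν).const_mul K) fun x => hFw j k (t, x)
  have hgronwall : ∀ᵐ s ∂volume.restrict (Ioo a b), ∫ x, ∑ j, w j (s, x) ^ 2 ∂ν ≤
      Fintype.card J * (Fintype.card κ * K) * ∫ t in a..s, ∫ x, ∑ j, w j (t, x) ^ 2 ∂ν := by
    filter_upwards [ae_all_iff.2 fun j => (h j).integral_sq_le (hw j) (hF j),
      ae_restrict_mem measurableSet_Ioo] with s hs hsab
    rw [integral_finsetSum _ fun j _ => ((hw j).sq.slice s).integrable ν,
      mul_assoc, ← nsmul_eq_mul]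
    refine Finset.sum_le_card_nsmul _ _ _ fun j _ => (hs j).trans ?_
    rw [← intervalIntegral.integral_const_mul]
    exact intervalIntegral.integral_mono hsab.1.le
      (BddMeasurable.sum (fun k => (hF j k).sq.integral_prod_right ν) |>.intervalIntegrable a s)
      ((hy.intervalIntegrable a s).const_mul _) (hflux j)
  have hslices := ae_eq_zero_of_le_mul_integral hy.locallyIntegrable
    (fun t => integral_nonneg fun x => hq0 (t, x)) (by positivity) hgronwall
  have htotal : ∫ p, ∑ j, w j p ^ 2 ∂(volume.restrict (Ioo a b)).prod ν = 0 := by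
    rw [integral_prod _ (hq.integrable _)]
    exact integral_eq_zero_of_ae hslices
  filter_upwards [(integral_eq_zero_iff_of_nonneg hq0 (hq.integrable _)).1 htotal] with p hp j
  exact pow_eq_zero_iff two_ne_zero |>.1 <|
    (Finset.sum_eq_zero_iff_of_nonneg fun i _ => sq_nonneg (w i p)).1 hp j (Finset.mem_univ j)

end IsModewiseSolution

end GradientEigensystem

/-! ### Mixed Dirichlet–Neumann modes of the cylinder -/

namespace cylDomain

variable {d : ℕ}

/-- Frequencies of the Laplace eigenfunctions on the cylinder: half-integer multiples of `π/2`
along the axis, where a Dirichlet condition at `-1` meets a Neumann condition at `1`, and multiples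
of `2π` along the torus. -/
noncomputable def freq (n : Fin (d + 1) → ℤ) : Fin (d + 1) → ℝ :=
  Fin.cons ((2 * n 0 + 1) * Real.pi / 4) fun j => 2 * Real.pi * n j.succ

/-- The linear phase of a mode along the torus directions. -/
noncomputable def transversePhase (n : Fin (d + 1) → ℤ) : (Fin (d + 1) → ℝ) →L[ℝ] ℝ :=
  ∑ j : Fin d, freq n j.succ • ContinuousLinearMap.proj j.succ

/-- A product of cosines with phase shift `δ₀` along the axis and `δ₁` along the torus. Shifting a
phase by `π/2` differentiates in the corresponding direction, so that the eigenfunctions and their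
normalized partial derivatives all belong to this family. -/
noncomputable def phaseMode (n : Fin (d + 1) → ℤ) (δ₀ δ₁ : ℝ) (x : Fin (d + 1) → ℝ) : ℝ :=
  Real.cos (freq n 0 * (x 0 + 1) + δ₀) * Real.cos (transversePhase n x + δ₁)

lemma transversePhase_single_zero (n : Fin (d + 1) → ℤ) :
    transversePhase n (Pi.single 0 1) = 0 := by
  simp [transversePhase]

lemma transversePhase_single_succ (n : Fin (d + 1) → ℤ) (j : Fin d) :
    transversePhase n (Pi.single j.succ 1) = freq n j.succ := by
  simp [transversePhase, Pi.single_apply]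

lemma contDiff_phaseMode (n : Fin (d + 1) → ℤ) (δ₀ δ₁ : ℝ) {m : WithTop ℕ∞} :
    ContDiff ℝ m (phaseMode n δ₀ δ₁) := by
  unfold phaseMode
  fun_prop

lemma bddMeasurable_phaseMode (n : Fin (d + 1) → ℤ) (δ₀ δ₁ : ℝ) :
    BddMeasurable (phaseMode n δ₀ δ₁) := by
  refine ⟨(contDiff_phaseMode n δ₀ δ₁ (m := 0)).continuous.measurable, 1, fun x => ?_⟩
  rw [phaseMode, norm_mul]
  exact mul_le_one₀ (Real.abs_cos_le_one _) (norm_nonneg _) (Real.abs_cos_le_one _)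

lemma phaseMode_add_pi_left (n : Fin (d + 1) → ℤ) (δ₀ δ₁ : ℝ) (x : Fin (d + 1) → ℝ) :
    phaseMode n (δ₀ + Real.pi) δ₁ x = -phaseMode n δ₀ δ₁ x := by
  simp only [phaseMode, ← add_assoc, Real.cos_add_pi, neg_mul]

lemma phaseMode_add_pi_right (n : Fin (d + 1) → ℤ) (δ₀ δ₁ : ℝ) (x : Fin (d + 1) → ℝ) :
    phaseMode n δ₀ (δ₁ + Real.pi) x = -phaseMode n δ₀ δ₁ x := by
  simp only [phaseMode, ← add_assoc, Real.cos_add_pi, mul_neg]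

lemma phaseMode_add_single (n : Fin (d + 1) → ℤ) (δ₀ δ₁ : ℝ) (x : Fin (d + 1) → ℝ)
    {i : Fin (d + 1)} (hi : i ≠ 0) :
    phaseMode n δ₀ δ₁ (x + Pi.single i 1) = phaseMode n δ₀ δ₁ x := by
  obtain ⟨j, rfl⟩ := Fin.exists_succ_eq.2 hi
  have hperiod : transversePhase n x + freq n j.succ + δ₁ =
      transversePhase n x + δ₁ + n j.succ * (2 * Real.pi) := by
    simp only [freq, Fin.cons_succ]
    ring
  simp only [phaseMode, map_add, transversePhase_single_succ, hperiod,
    Real.cos_add_int_mul_two_pi, Pi.add_apply, Pi.single_eq_of_ne hi.symm, add_zero]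

lemma fderiv_phaseMode (n : Fin (d + 1) → ℤ) (δ₀ δ₁ : ℝ) (x v : Fin (d + 1) → ℝ) :
    fderiv ℝ (phaseMode n δ₀ δ₁) x v =
      freq n 0 * v 0 * phaseMode n (δ₀ + Real.pi / 2) δ₁ x +
        transversePhase n v * phaseMode n δ₀ (δ₁ + Real.pi / 2) x := by
  have haxial : HasFDerivAt (fun x : Fin (d + 1) → ℝ => freq n 0 * (x 0 + 1) + δ₀)
      (freq n 0 • ContinuousLinearMap.proj 0 : (Fin (d + 1) → ℝ) →L[ℝ] ℝ) x :=
    (((hasFDerivAt_apply 0 x).add_const 1).const_mul (freq n 0)).add_const δ₀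
  have htransverse : HasFDerivAt (fun x => transversePhase n x + δ₁) (transversePhase n) x :=
    (transversePhase n).hasFDerivAt.add_const δ₁
  have hmode : HasFDerivAt (phaseMode n δ₀ δ₁) _ x := haxial.cos.mul htransverse.cos
  rw [hmode.fderiv]
  simp only [phaseMode, ← add_assoc, Real.cos_add_pi_div_two, _root_.add_apply, _root_.smul_apply,
    smul_eq_mul, ContinuousLinearMap.proj_apply]
  ring

/-- The Laplace eigenfunctions of the cylinder that vanish at `x 0 = -1` and have vanishing normal
derivative at `x 0 = 1`. -/
noncomputable def mode (n : Fin (d + 1) → ℤ) (δ : ℝ) : (Fin (d + 1) → ℝ) → ℝ :=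
  phaseMode n (-(Real.pi / 2)) δ

/-- The partial derivative `∂ₖ` of `mode n δ`, divided by `freq n k`. -/
noncomputable def gradMode (n : Fin (d + 1) → ℤ) (δ : ℝ) (k : Fin (d + 1)) :
    (Fin (d + 1) → ℝ) → ℝ :=
  if k = 0 then phaseMode n 0 δ else phaseMode n (-(Real.pi / 2)) (δ + Real.pi / 2)

lemma contDiff_mode (n : Fin (d + 1) → ℤ) (δ : ℝ) {m : WithTop ℕ∞} : ContDiff ℝ m (mode n δ) :=
  contDiff_phaseMode _ _ _

lemma contDiff_gradMode (n : Fin (d + 1) → ℤ) (δ : ℝ) (k : Fin (d + 1)) {m : WithTop ℕ∞} :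
    ContDiff ℝ m (gradMode n δ k) := by
  unfold gradMode
  split_ifs <;> exact contDiff_phaseMode _ _ _

lemma bddMeasurable_gradMode (n : Fin (d + 1) → ℤ) (δ : ℝ) (k : Fin (d + 1)) :
    BddMeasurable (gradMode n δ k) := by
  unfold gradMode
  split_ifs <;> exact bddMeasurable_phaseMode _ _ _

lemma fderiv_mode (n : Fin (d + 1) → ℤ) (δ : ℝ) (k : Fin (d + 1)) (x : Fin (d + 1) → ℝ) :
    fderiv ℝ (mode n δ) x (Pi.single k 1) = freq n k * gradMode n δ k x := by
  rw [mode, fderiv_phaseMode]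
  cases k using Fin.cases with
  | zero => simp [gradMode, transversePhase_single_zero]
  | succ j => simp [gradMode, transversePhase_single_succ]

lemma fderiv_gradMode (n : Fin (d + 1) → ℤ) (δ : ℝ) (k : Fin (d + 1)) (x : Fin (d + 1) → ℝ) :
    fderiv ℝ (gradMode n δ k) x (Pi.single k 1) = -(freq n k * mode n δ x) := by
  cases k using Fin.cases with
  | zero =>
    have hshift : phaseMode n (Real.pi / 2) δ x = -mode n δ x := by
      rw [mode, ← phaseMode_add_pi_left]
      ring_nf
    simp [gradMode, fderiv_phaseMode, transversePhase_single_zero, hshift]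
  | succ j =>
    have hshift : phaseMode n (-(Real.pi / 2)) (δ + Real.pi / 2 + Real.pi / 2) x = -mode n δ x := by
      rw [mode, ← phaseMode_add_pi_right]
      ring_nf
    simp [gradMode, fderiv_phaseMode, transversePhase_single_succ, hshift]

lemma fderiv_fderiv_mode (n : Fin (d + 1) → ℤ) (δ : ℝ) (k : Fin (d + 1)) (x : Fin (d + 1) → ℝ) :
    fderiv ℝ (fun y => fderiv ℝ (mode n δ) y (Pi.single k 1)) x (Pi.single k 1) =
      -(freq n k ^ 2 * mode n δ x) := by
  simp only [fderiv_mode]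
  rw [fderiv_const_mul ((contDiff_gradMode n δ k).differentiable one_ne_zero x)]
  simp only [_root_.smul_apply, smul_eq_mul, fderiv_gradMode]
  ring

lemma mode_eq_zero_of_left (n : Fin (d + 1) → ℤ) (δ : ℝ) {x : Fin (d + 1) → ℝ} (hx : x 0 = -1) :
    mode n δ x = 0 := by
  simp [mode, phaseMode, hx]

lemma gradMode_zero_eq_zero_of_right (n : Fin (d + 1) → ℤ) (δ : ℝ) {x : Fin (d + 1) → ℝ}
    (hx : x 0 = 1) : gradMode n δ 0 x = 0 := by
  have hcos : Real.cos (freq n 0 * (1 + 1) + 0) = 0 :=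
    Real.cos_eq_zero_iff.2 ⟨n 0, by simp only [freq, Fin.cons_zero]; ring⟩
  rw [gradMode, if_pos rfl, phaseMode, hx, hcos, zero_mul]

end cylDomain

/-! ### Parseval's identity on the unit cube -/

section UnitCube

variable {ι : Type*}

/-- The half-open unit cube `(0, 1]^ι`, a fundamental domain of the torus `UnitAddTorus ι`. -/
def unitCube (ι : Type*) : Set (ι → ℝ) := {x | ∀ i, x i ∈ Ioc (0 : ℝ) 1}

lemma measurableSet_unitCube [Countable ι] : MeasurableSet (unitCube ι) :=
  MeasurableSet.univ_pi' fun _ => measurableSet_Ioc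

lemma exists_measurable_section_unitCube :
    ∃ s : UnitAddTorus ι → ι → ℝ, Measurable s ∧
      ∀ x ∈ unitCube ι, s (fun i => (x i : UnitAddCircle)) = x := by
  refine ⟨fun t => (UnitAddTorus.measurableEquivPiIoc 0 t).1,
    measurable_subtype_coe.comp (MeasurableEquiv.measurable _), fun x hx => ?_⟩
  have hinv := (UnitAddTorus.measurableEquivPiIoc (ι := ι) 0).apply_symm_apply
    ⟨x, by simpa [unitCube] using hx⟩
  rw [UnitAddTorus.coe_symm_measurableEquivPiIoc_apply] at hinv
  exact congrArg Subtype.val hinv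

variable [Fintype ι]

/-- The character `x ↦ exp (-2πi n·x)` of the torus, as a periodic function on `ℝ^ι`. -/
noncomputable def cubeCharacter (n : ι → ℤ) (x : ι → ℝ) : ℂ :=
  Complex.exp (↑(-(2 * Real.pi * ∑ i, n i * x i)) * Complex.I)

lemma volume_restrict_unitCube :
    (volume : Measure (ι → ℝ)).restrict (unitCube ι) =
      Measure.pi fun _ => volume.restrict (Ioc 0 1) := by
  have hpi : unitCube ι = Set.univ.pi fun _ => Ioc (0 : ℝ) 1 := by
    ext x
    simp [unitCube]
  rw [hpi, volume_pi, Measure.restrict_pi_pi]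

lemma bddMeasurable_cubeCharacter (n : ι → ℤ) : BddMeasurable (cubeCharacter n) :=
  ⟨by unfold cubeCharacter; fun_prop, 1, fun _ => (Complex.norm_exp_ofReal_mul_I _).le⟩

lemma mFourier_neg_coe (n : ι → ℤ) (x : ι → ℝ) :
    UnitAddTorus.mFourier (-n) (fun i => (x i : UnitAddCircle)) = cubeCharacter n x := by
  simp only [UnitAddTorus.mFourier, ContinuousMap.coe_mk, fourier_coe_apply, ← Complex.exp_sum,
    cubeCharacter, Complex.ofReal_neg, Complex.ofReal_mul, Complex.ofReal_sum, Finset.mul_sum,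
    ← Finset.sum_neg_distrib, Finset.sum_mul]
  congr 1
  refine Finset.sum_congr rfl fun i _ => ?_
  push_cast [Pi.neg_apply]
  ring

/- `UnitAddTorus` is measured by the Haar probability measure, which is not a global instance. -/
noncomputable local instance unitAddCircleMeasureSpace : MeasureSpace UnitAddCircle :=
  ⟨AddCircle.haarAddCircle⟩

local instance isProbabilityMeasure_volume_unitAddCircle :
    IsProbabilityMeasure (volume : Measure UnitAddCircle) :=
  inferInstanceAs (IsProbabilityMeasure AddCircle.haarAddCircle)

lemma integral_unitAddTorus_eq_integral_unitCube {F : Type*} [NormedAddCommGroup F]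
    [NormedSpace ℝ F] (f : UnitAddTorus ι → F) :
    ∫ t, f t = ∫ x in unitCube ι, f fun i => (x i : UnitAddCircle) := by
  simpa only [Pi.zero_apply, zero_add, unitCube] using UnitAddTorus.integral_preimage f 0

lemma hasSum_sq_integral_cubeCharacter_mul {U : (ι → ℝ) → ℂ} (hU : BddMeasurable U) :
    HasSum (fun n : ι → ℤ => ‖∫ x in unitCube ι, cubeCharacter n x * U x‖ ^ 2)
      (∫ x in unitCube ι, ‖U x‖ ^ 2) := by
  obtain ⟨s, hs, hsx⟩ := exists_measurable_section_unitCube (ι := ι)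
  have hL : MemLp (fun t => U (s t)) 2 volume := (hU.comp hs).memLp 2 _
  have hnorm : ∫ t, ‖hL.toLp _ t‖ ^ 2 = ∫ x in unitCube ι, ‖U x‖ ^ 2 := by
    rw [integral_congr_ae (g := fun t => ‖U (s t)‖ ^ 2)
      (hL.coeFn_toLp.mono fun t ht => congrArg (‖·‖ ^ 2) ht),
      integral_unitAddTorus_eq_integral_unitCube]
    exact setIntegral_congr_fun measurableSet_unitCube fun x hx => by simp only [hsx x hx]
  have hcoeff (n : ι → ℤ) : UnitAddTorus.mFourierCoeff (hL.toLp _) n =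
      ∫ x in unitCube ι, cubeCharacter n x * U x := by
    rw [UnitAddTorus.mFourierCoeff, integral_congr_ae
      (g := fun t => UnitAddTorus.mFourier (-n) t • U (s t))
      (hL.coeFn_toLp.mono fun t ht => congrArg (UnitAddTorus.mFourier (-n) t • ·) ht),
      integral_unitAddTorus_eq_integral_unitCube]
    exact setIntegral_congr_fun measurableSet_unitCube fun x hx => by
      simp only [hsx x hx, mFourier_neg_coe, smul_eq_mul]
  simpa only [hnorm, hcoeff] using UnitAddTorus.hasSum_sq_mFourierCoeff (hL.toLp _)

end UnitCube

section Folding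

variable {F : Type*} [NormedAddCommGroup F] [NormedSpace ℝ F]

lemma integral_zero_one_eq_fold {f : ℝ → F} (hf : IntervalIntegrable f volume 0 1) :
    ∫ z in (0 : ℝ)..1, f z =
      (1 / 4 : ℝ) • ((∫ z in (-1 : ℝ)..1, f (z / 4 + 1 / 4)) +
        ∫ z in (-1 : ℝ)..1, f (3 / 4 - z / 4)) := by
  have hleft : ∫ z in (-1 : ℝ)..1, f (z / 4 + 1 / 4) = (4 : ℝ) • ∫ z in (0 : ℝ)..1 / 2, f z := by
    rw [intervalIntegral.integral_comp_div_add f (by norm_num)]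
    norm_num
  have hright : ∫ z in (-1 : ℝ)..1, f (3 / 4 - z / 4) = (4 : ℝ) • ∫ z in (1 / 2 : ℝ)..1, f z := by
    rw [intervalIntegral.integral_comp_sub_div f (by norm_num)]
    norm_num
  have hhalf : (1 / 2 : ℝ) ∈ uIcc 0 1 := by norm_num [mem_uIcc]
  rw [hleft, hright, ← smul_add, smul_smul, intervalIntegral.integral_add_adjacent_intervals
    (hf.mono_set (uIcc_subset_uIcc_left hhalf)) (hf.mono_set (uIcc_subset_uIcc_right hhalf))]
  norm_num

lemma integral_pi_fin_succ {d : ℕ} (μ : Fin (d + 1) → Measure ℝ) [∀ i, SigmaFinite (μ i)]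
    (f : (Fin (d + 1) → ℝ) → F) :
    ∫ x, f x ∂Measure.pi μ =
      ∫ p, f (Fin.cons p.1 p.2) ∂(μ 0).prod (Measure.pi fun j => μ j.succ) := by
  have hcons := (measurePreserving_piFinSuccAbove μ 0).symm
  rw [← hcons.integral_comp (MeasurableEquiv.measurableEmbedding _)]
  simp [MeasurableEquiv.piFinSuccAbove, Fin.insertNthEquiv]

lemma measurable_fin_cons {d : ℕ} :
    Measurable fun p : ℝ × (Fin d → ℝ) => (Fin.cons p.1 p.2 : Fin (d + 1) → ℝ) :=
  measurable_pi_lambda _ <| Fin.cases measurable_fst fun j => by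
    simpa using measurable_snd.eval (a := j)

lemma measurable_update_zero {d : ℕ} {φ : (Fin (d + 1) → ℝ) → ℝ} (hφ : Measurable φ) :
    Measurable fun x : Fin (d + 1) → ℝ => Function.update x 0 (φ x) :=
  measurable_pi_lambda _ <| Fin.cases (by simpa using hφ) fun j => by
    simpa using measurable_pi_apply j.succ

end Folding

namespace cylDomain

variable {d : ℕ}

lemma measurableSet_cylDomain : MeasurableSet (cylDomain d) := by
  unfold cylDomain
  measurability

lemma volume_restrict_cylDomain :
    (volume : Measure (Fin (d + 1) → ℝ)).restrict (cylDomain d) =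
      Measure.pi fun i => volume.restrict (Ioc (if i = 0 then -1 else 0) 1) := by
  have hpi : cylDomain d = Set.univ.pi fun i => if i = 0 then Ioo (-1 : ℝ) 1 else Ico 0 1 := by
    ext x
    simp [cylDomain, Fin.forall_fin_succ, and_assoc]
  rw [hpi, volume_pi, Measure.restrict_pi_pi]
  congr 1 with i : 1
  split_ifs
  · exact Measure.restrict_congr_set Ioo_ae_eq_Ioc
  · exact Measure.restrict_congr_set Ico_ae_eq_Ioc

instance isFiniteMeasure_volume_restrict :
    IsFiniteMeasure ((volume : Measure (Fin (d + 1) → ℝ)).restrict (cylDomain d)) := by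
  rw [volume_restrict_cylDomain]
  infer_instance

lemma integral_unitCube_eq_fold {F : Type*} [NormedAddCommGroup F] [NormedSpace ℝ F]
    [MeasurableSpace F] [BorelSpace F] [SecondCountableTopology F] {f : (Fin (d + 1) → ℝ) → F}
    (hf : BddMeasurable f) :
    ∫ x in unitCube (Fin (d + 1)), f x =
      (1 / 4 : ℝ) • ∫ x in cylDomain d, (f (Function.update x 0 (x 0 / 4 + 1 / 4)) +
        f (Function.update x 0 (3 / 4 - x 0 / 4))) := by
  have hfL : BddMeasurable fun x : Fin (d + 1) → ℝ => f (Function.update x 0 (x 0 / 4 + 1 / 4)) :=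
    hf.comp (measurable_update_zero (by fun_prop))
  have hfR : BddMeasurable fun x : Fin (d + 1) → ℝ => f (Function.update x 0 (3 / 4 - x 0 / 4)) :=
    hf.comp (measurable_update_zero (by fun_prop))
  have hprod {g : (Fin (d + 1) → ℝ) → F} (hg : BddMeasurable g) :
      BddMeasurable fun p : ℝ × (Fin d → ℝ) => g (Fin.cons p.1 p.2) :=
    hg.comp measurable_fin_cons
  rw [integral_add (hfL.integrable _) (hfR.integrable _), volume_restrict_unitCube,
    volume_restrict_cylDomain]
  simp only [integral_pi_fin_succ, Fin.succ_ne_zero, if_true, if_false]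
  rw [integral_prod_symm _ ((hprod hf).integrable _),
    integral_prod_symm _ ((hprod hfL).integrable _),
    integral_prod_symm _ ((hprod hfR).integrable _), ← integral_add, ← integral_smul]
  · refine integral_congr_ae (.of_forall fun y => ?_)
    simpa [intervalIntegral.integral_of_le] using
      integral_zero_one_eq_fold (((hprod hf).comp measurable_prodMk_right).intervalIntegrable 0 1)
  · exact ((hprod hfL).integrable _).integral_prod_right
  · exact ((hprod hfR).integrable _).integral_prod_right

end cylDomain

/-! ### Parseval's identity on the cylinder -/

namespace cylDomain

variable {d : ℕ}

/-- The cylinder is folded twice into the unit cube, by `x 0 ↦ x 0 / 4 + 1 / 4` and by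
`x 0 ↦ 3 / 4 - x 0 / 4`. This extends `h` to the cube along both folds, with unimodular factors
chosen so that the Fourier coefficients of the extension are the coefficients of `h` against
`phaseMode n δ₀ δ₁` for every `δ₁`. -/
noncomputable def twistedExtension (δ₀ : ℝ) (h : (Fin (d + 1) → ℝ) → ℝ) (z : Fin (d + 1) → ℝ) :
    ℂ :=
  Complex.exp (↑(if z 0 ≤ 1 / 2 then -(Real.pi * z 0) else 2 * δ₀ + Real.pi - Real.pi * z 0) *
    Complex.I) * h (Function.update z 0 (1 - |4 * z 0 - 2|))

lemma norm_twistedExtension (δ₀ : ℝ) (h : (Fin (d + 1) → ℝ) → ℝ) (z : Fin (d + 1) → ℝ) :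
    ‖twistedExtension δ₀ h z‖ = |h (Function.update z 0 (1 - |4 * z 0 - 2|))| := by
  rw [twistedExtension, norm_mul, Complex.norm_exp_ofReal_mul_I, one_mul, Complex.norm_real,
    Real.norm_eq_abs]

lemma bddMeasurable_twistedExtension (δ₀ : ℝ) {h : (Fin (d + 1) → ℝ) → ℝ} (hh : BddMeasurable h) :
    BddMeasurable (twistedExtension δ₀ h) := by
  have hfold := hh.comp (measurable_update_zero (d := d) (φ := fun z => 1 - |4 * z 0 - 2|)
    (by fun_prop))
  have hphase : Measurable fun z : Fin (d + 1) → ℝ =>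
      if z 0 ≤ 1 / 2 then -(Real.pi * z 0) else 2 * δ₀ + Real.pi - Real.pi * z 0 :=
    .ite (measurableSet_le (by fun_prop) (by fun_prop)) (by fun_prop) (by fun_prop)
  obtain ⟨C, hC⟩ := hfold.bounded
  exact ⟨((Complex.measurable_ofReal.comp hphase).mul_const _).cexp.mul
    (Complex.measurable_ofReal.comp hfold.measurable), C,
    fun z => norm_twistedExtension δ₀ h z ▸ hC z⟩

lemma cubeCharacter_update_zero (n : Fin (d + 1) → ℤ) (x : Fin (d + 1) → ℝ) (c : ℝ) :
    cubeCharacter n (Function.update x 0 c) =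
      Complex.exp (↑(-(2 * Real.pi * n 0 * c) - transversePhase n x) * Complex.I) := by
  have htransverse : transversePhase n x = 2 * Real.pi * ∑ j : Fin d, n j.succ * x j.succ := by
    simp [transversePhase, freq, Finset.mul_sum, mul_assoc]
  rw [cubeCharacter, Fin.sum_univ_succ, htransverse]
  simp only [Function.update_self, Function.update_of_ne (Fin.succ_ne_zero _)]
  ring_nf

section Fold

variable (n : Fin (d + 1) → ℤ) (δ₀ : ℝ) (h : (Fin (d + 1) → ℝ) → ℝ) {x : Fin (d + 1) → ℝ}

lemma twistedExtension_left (hx : x ∈ cylDomain d) :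
    twistedExtension δ₀ h (Function.update x 0 (x 0 / 4 + 1 / 4)) =
      Complex.exp (↑(-(Real.pi * (x 0 / 4 + 1 / 4))) * Complex.I) * h x := by
  have hle : x 0 / 4 + 1 / 4 ≤ 1 / 2 := by linarith [hx.2.1]
  have hfold : 1 - |4 * (x 0 / 4 + 1 / 4) - 2| = x 0 := by
    rw [abs_of_nonpos (by linarith)]
    ring
  rw [twistedExtension, Function.update_self, if_pos hle, hfold, Function.update_idem,
    Function.update_eq_self]

lemma twistedExtension_right (hx : x ∈ cylDomain d) :
    twistedExtension δ₀ h (Function.update x 0 (3 / 4 - x 0 / 4)) =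
      Complex.exp (↑(2 * δ₀ + Real.pi - Real.pi * (3 / 4 - x 0 / 4)) * Complex.I) * h x := by
  have hlt : 1 / 2 < 3 / 4 - x 0 / 4 := by linarith [hx.2.1]
  have hfold : 1 - |4 * (3 / 4 - x 0 / 4) - 2| = x 0 := by
    rw [abs_of_nonneg (by linarith)]
    ring
  rw [twistedExtension, Function.update_self, if_neg hlt.not_ge, hfold, Function.update_idem,
    Function.update_eq_self]

lemma cubeCharacter_mul_twistedExtension_left (hx : x ∈ cylDomain d) :
    cubeCharacter n (Function.update x 0 (x 0 / 4 + 1 / 4)) *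
        twistedExtension δ₀ h (Function.update x 0 (x 0 / 4 + 1 / 4)) =
      Complex.exp (↑(-(freq n 0 * (x 0 + 1)) - transversePhase n x) * Complex.I) * h x := by
  rw [cubeCharacter_update_zero, twistedExtension_left δ₀ h hx, ← mul_assoc, ← Complex.exp_add,
    ← add_mul, ← Complex.ofReal_add, freq, Fin.cons_zero]
  ring_nf

lemma cubeCharacter_mul_twistedExtension_right (hx : x ∈ cylDomain d) :
    cubeCharacter n (Function.update x 0 (3 / 4 - x 0 / 4)) *
        twistedExtension δ₀ h (Function.update x 0 (3 / 4 - x 0 / 4)) =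
      Complex.exp (↑(freq n 0 * (x 0 + 1) + 2 * δ₀ - transversePhase n x) * Complex.I) * h x := by
  have hperiod : ((-(2 * Real.pi * n 0 * (3 / 4 - x 0 / 4)) - transversePhase n x +
      (2 * δ₀ + Real.pi - Real.pi * (3 / 4 - x 0 / 4)) : ℝ) : ℂ) * Complex.I =
      ↑(freq n 0 * (x 0 + 1) + 2 * δ₀ - transversePhase n x) * Complex.I +
        ((-n 0 : ℤ) : ℂ) * (2 * Real.pi * Complex.I) := by
    simp only [freq, Fin.cons_zero]
    push_cast
    ring
  rw [cubeCharacter_update_zero, twistedExtension_right δ₀ h hx, ← mul_assoc, ← Complex.exp_add,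
    ← add_mul, ← Complex.ofReal_add, hperiod, Complex.exp_add, Complex.exp_int_mul_two_pi_mul_I,
    mul_one]

end Fold

lemma exp_neg_add_exp_eq_two_mul_exp_mul_cos (α β δ₀ δ₁ : ℝ) :
    Complex.exp (↑(-α - β) * Complex.I) + Complex.exp (↑(α + 2 * δ₀ - β) * Complex.I) =
      2 * Complex.exp (↑(δ₀ + δ₁) * Complex.I) * (↑(Real.cos (α + δ₀) * Real.cos (β + δ₁)) +
        ↑(Real.cos (α + δ₀) * Real.cos (β + (δ₁ + Real.pi / 2))) * Complex.I) := by
  have hcos : 2 * (Real.cos (α + δ₀) : ℂ) =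
      Complex.exp (↑(α + δ₀) * Complex.I) + Complex.exp (-↑(α + δ₀) * Complex.I) := by
    rw [Complex.ofReal_cos, Complex.two_cos]
  have hexp : (Real.cos (β + δ₁) : ℂ) + Real.cos (β + (δ₁ + Real.pi / 2)) * Complex.I =
      Complex.exp (-↑(β + δ₁) * Complex.I) := by
    rw [← add_assoc, Real.cos_add_pi_div_two, Complex.exp_mul_I, Complex.cos_neg, Complex.sin_neg]
    simp
  calc _ = Complex.exp (↑(δ₀ + δ₁) * Complex.I) *
        (Complex.exp (↑(α + δ₀) * Complex.I) + Complex.exp (-↑(α + δ₀) * Complex.I)) *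
          Complex.exp (-↑(β + δ₁) * Complex.I) := by
        rw [mul_add, add_mul, ← Complex.exp_add, ← Complex.exp_add, ← Complex.exp_add,
          ← Complex.exp_add, add_comm]
        push_cast
        ring_nf
    _ = _ := by
        rw [← hcos, ← hexp]
        push_cast
        ring

lemma integral_cubeCharacter_mul_twistedExtension (n : Fin (d + 1) → ℤ) (δ₀ δ₁ : ℝ)
    {h : (Fin (d + 1) → ℝ) → ℝ} (hh : BddMeasurable h) :
    ∫ z in unitCube (Fin (d + 1)), cubeCharacter n z * twistedExtension δ₀ h z =
      Complex.exp (↑(δ₀ + δ₁) * Complex.I) / 2 *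
        (↑(∫ x in cylDomain d, h x * phaseMode n δ₀ δ₁ x) +
          ↑(∫ x in cylDomain d, h x * phaseMode n δ₀ (δ₁ + Real.pi / 2) x) * Complex.I) := by
  have hint (δ : ℝ) : Integrable (fun x => ((h x * phaseMode n δ₀ δ x : ℝ) : ℂ))
      (volume.restrict (cylDomain d)) :=
    ((hh.mul (bddMeasurable_phaseMode n δ₀ δ)).integrable _).ofReal
  have hpointwise {x : Fin (d + 1) → ℝ} (hx : x ∈ cylDomain d) :
      cubeCharacter n (Function.update x 0 (x 0 / 4 + 1 / 4)) *
          twistedExtension δ₀ h (Function.update x 0 (x 0 / 4 + 1 / 4)) +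
        cubeCharacter n (Function.update x 0 (3 / 4 - x 0 / 4)) *
          twistedExtension δ₀ h (Function.update x 0 (3 / 4 - x 0 / 4)) =
      2 * Complex.exp (↑(δ₀ + δ₁) * Complex.I) * (((h x * phaseMode n δ₀ δ₁ x : ℝ) : ℂ) +
        ((h x * phaseMode n δ₀ (δ₁ + Real.pi / 2) x : ℝ) : ℂ) * Complex.I) := by
    rw [cubeCharacter_mul_twistedExtension_left n δ₀ h hx,
      cubeCharacter_mul_twistedExtension_right n δ₀ h hx, ← add_mul,
      exp_neg_add_exp_eq_two_mul_exp_mul_cos _ _ _ δ₁]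
    simp only [phaseMode, Complex.ofReal_mul]
    ring
  rw [integral_unitCube_eq_fold
      ((bddMeasurable_cubeCharacter n).mul (bddMeasurable_twistedExtension δ₀ hh)),
    setIntegral_congr_fun measurableSet_cylDomain fun x hx => hpointwise hx, integral_const_mul,
    integral_add (hint _) ((hint _).mul_const _), integral_mul_const, integral_complex_ofReal,
    integral_complex_ofReal, Complex.real_smul]
  push_cast
  ring

lemma integral_sq_norm_twistedExtension (δ₀ : ℝ) {h : (Fin (d + 1) → ℝ) → ℝ}
    (hh : BddMeasurable h) :
    ∫ z in unitCube (Fin (d + 1)), ‖twistedExtension δ₀ h z‖ ^ 2 =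
      1 / 2 * ∫ x in cylDomain d, h x ^ 2 := by
  have hsq : BddMeasurable fun z => ‖twistedExtension δ₀ h z‖ ^ 2 := by
    simp only [norm_twistedExtension, sq_abs]
    exact (hh.comp (measurable_update_zero (by fun_prop))).sq
  rw [integral_unitCube_eq_fold hsq, setIntegral_congr_fun (g := fun x => 2 * h x ^ 2)
    measurableSet_cylDomain, integral_const_mul, smul_eq_mul]
  · ring
  · intro x hx
    simp only [twistedExtension_left δ₀ h hx, twistedExtension_right δ₀ h hx, norm_mul,
      Complex.norm_exp_ofReal_mul_I, Complex.norm_real, Real.norm_eq_abs, one_mul, sq_abs]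
    ring

lemma hasSum_sq_integral_mul_phaseMode (δ₀ δ₁ : ℝ) {h : (Fin (d + 1) → ℝ) → ℝ}
    (hh : BddMeasurable h) :
    HasSum (fun n => (∫ x in cylDomain d, h x * phaseMode n δ₀ δ₁ x) ^ 2 +
        (∫ x in cylDomain d, h x * phaseMode n δ₀ (δ₁ + Real.pi / 2) x) ^ 2)
      (2 * ∫ x in cylDomain d, h x ^ 2) := by
  have hcoeff (n : Fin (d + 1) → ℤ) :
      4 * ‖∫ z in unitCube (Fin (d + 1)), cubeCharacter n z * twistedExtension δ₀ h z‖ ^ 2 =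
        (∫ x in cylDomain d, h x * phaseMode n δ₀ δ₁ x) ^ 2 +
          (∫ x in cylDomain d, h x * phaseMode n δ₀ (δ₁ + Real.pi / 2) x) ^ 2 := by
    rw [integral_cubeCharacter_mul_twistedExtension n δ₀ δ₁ hh, norm_mul, norm_div,
      Complex.norm_exp_ofReal_mul_I, mul_pow, ← Complex.normSq_eq_norm_sq (_ + _),
      Complex.normSq_add_mul_I, Complex.norm_two]
    ring
  have hnorm : 4 * ∫ z in unitCube (Fin (d + 1)), ‖twistedExtension δ₀ h z‖ ^ 2 =
      2 * ∫ x in cylDomain d, h x ^ 2 := by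
    rw [integral_sq_norm_twistedExtension δ₀ hh]
    ring
  simpa only [hcoeff, hnorm] using (hasSum_sq_integral_cubeCharacter_mul
    (bddMeasurable_twistedExtension δ₀ hh)).mul_left 4

/-- The index `0 : Fin 2` stands for the even (cosine) and `1` for the odd (sine) mode along the
torus. -/
noncomputable def parityPhase (s : Fin 2) : ℝ := s * (Real.pi / 2)

lemma hasSum_sq_integral_mul_phaseMode_parityPhase (δ₀ δ₁ : ℝ) {h : (Fin (d + 1) → ℝ) → ℝ}
    (hh : BddMeasurable h) :
    HasSum (fun m : (Fin (d + 1) → ℤ) × Fin 2 =>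
        (∫ x in cylDomain d, h x * phaseMode m.1 δ₀ (parityPhase m.2 + δ₁) x) ^ 2)
      (2 * ∫ x in cylDomain d, h x ^ 2) := by
  have hfiber (n : Fin (d + 1) → ℤ) :
      ∑ s, (∫ x in cylDomain d, h x * phaseMode n δ₀ (parityPhase s + δ₁) x) ^ 2 =
        (∫ x in cylDomain d, h x * phaseMode n δ₀ δ₁ x) ^ 2 +
          (∫ x in cylDomain d, h x * phaseMode n δ₀ (δ₁ + Real.pi / 2) x) ^ 2 := by
    simp [Fin.sum_univ_two, parityPhase, add_comm]
  have hsum := hasSum_sq_integral_mul_phaseMode δ₀ δ₁ hh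
  simp only [← hfiber] at hsum
  have hsummable : Summable fun m : (Fin (d + 1) → ℤ) × Fin 2 =>
      (∫ x in cylDomain d, h x * phaseMode m.1 δ₀ (parityPhase m.2 + δ₁) x) ^ 2 := by
    refine (summable_prod_of_nonneg fun _ => sq_nonneg _).2 ⟨fun _ => .of_finite, ?_⟩
    simpa only [tsum_fintype] using hsum.summable
  rw [hsum.unique (hsummable.hasSum.prod_fiberwise fun _ => hasSum_fintype _)]
  exact hsummable.hasSum

/-- The mixed Dirichlet–Neumann eigenfunctions of the Laplacian on the cylinder. -/
noncomputable def eigensystem (d : ℕ) :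
    GradientEigensystem (volume.restrict (cylDomain d)) ((Fin (d + 1) → ℤ) × Fin 2)
      (Fin (d + 1)) where
  freq m := freq m.1
  mode m := mode m.1 (parityPhase m.2)
  gradMode m := gradMode m.1 (parityPhase m.2)
  frameConst := 2
  bddMeasurable_mode m := bddMeasurable_phaseMode _ _ _
  bddMeasurable_gradMode m k := bddMeasurable_gradMode _ _ k
  frameConst_pos := two_pos
  hasSum_sq_integral_mul_mode h hh := by
    simpa only [mode, add_zero] using
      hasSum_sq_integral_mul_phaseMode_parityPhase (-(Real.pi / 2)) 0 hh
  sum_sq_integral_mul_gradMode_le h hh k A := by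
    suffices hsum : HasSum (fun m : (Fin (d + 1) → ℤ) × Fin 2 =>
        (∫ x in cylDomain d, h x * gradMode m.1 (parityPhase m.2) k x) ^ 2)
        (2 * ∫ x in cylDomain d, h x ^ 2) from sum_le_hasSum A (fun _ _ => sq_nonneg _) hsum
    by_cases hk : k = 0
    · simpa only [gradMode, hk, if_true, add_zero] using
        hasSum_sq_integral_mul_phaseMode_parityPhase 0 0 hh
    · simpa only [gradMode, hk, if_false] using
        hasSum_sq_integral_mul_phaseMode_parityPhase (-(Real.pi / 2)) (Real.pi / 2) hh

end cylDomain

/-! ### The mobility matrix -/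

section Mobility

lemma sq_norm_le_sum_sq {ι : Type*} [Fintype ι] (x : ι → ℝ) : ‖x‖ ^ 2 ≤ ∑ i, x i ^ 2 := by
  have hsum : 0 ≤ ∑ i, x i ^ 2 := Finset.sum_nonneg fun i _ => sq_nonneg _
  refine (Real.le_sqrt (norm_nonneg x) hsum).1 ((pi_norm_le_iff_of_nonneg (Real.sqrt_nonneg _)).2
    fun i => Real.abs_le_sqrt ?_)
  exact Finset.single_le_sum (f := fun i => x i ^ 2) (fun i _ => sq_nonneg _) (Finset.mem_univ i)

/-- The physical states `(m, φ) ∈ [-1,1] × [0,1]`. -/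
def stateSpace : Set (Fin 2 → ℝ) := Icc ![-1, 0] ![1, 1]

lemma mem_stateSpace_iff {a : Fin 2 → ℝ} :
    a ∈ stateSpace ↔ a 0 ∈ Icc (-1) 1 ∧ a 1 ∈ Icc 0 1 := by
  simp only [stateSpace, mem_Icc, Pi.le_def, Fin.forall_fin_two, cons_val_zero, cons_val_one]
  tauto

lemma norm_le_one_of_mem_stateSpace {a : Fin 2 → ℝ} (ha : a ∈ stateSpace) : ‖a‖ ≤ 1 := by
  obtain ⟨h₀, h₁⟩ := mem_stateSpace_iff.1 ha
  rw [pi_norm_le_iff_of_nonneg zero_le_one, Fin.forall_fin_two]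
  exact ⟨abs_le.2 h₀, abs_le.2 ⟨neg_one_lt_zero.le.trans h₁.1, h₁.2⟩⟩

namespace SigmaBC

lemma contDiff_entries {n : WithTop ℕ∞} :
    ContDiff ℝ n fun (a : Fin 2 → ℝ) (i j : Fin 2) => SigmaBC a i j := by
  refine contDiff_pi.2 fun i => contDiff_pi.2 fun j => ?_
  fin_cases i <;> fin_cases j <;>
    simp only [SigmaBC, Fin.isValue, Fin.mk_one, Fin.zero_eta, Matrix.smul_apply, of_apply,
      cons_val', cons_val_zero, cons_val_one, cons_val_fin_one, smul_eq_mul] <;> fun_prop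

lemma bddMeasurable_mulVec {X : Type*} [MeasurableSpace X] {u v : X → Fin 2 → ℝ}
    (hu : Measurable u) (hu' : ∀ x, u x ∈ stateSpace) (hv : BddMeasurable v) (i : Fin 2) :
    BddMeasurable fun x => (SigmaBC (u x) *ᵥ v x) i := by
  obtain ⟨C, hC⟩ := isCompact_Icc.exists_bound_of_continuousOn
    (contDiff_entries (n := 0)).continuous.continuousOn (s := stateSpace)
  have hentries : BddMeasurable fun x i j => SigmaBC (u x) i j :=
    ⟨contDiff_entries (n := 0) |>.continuous.measurable.comp hu, C, fun x => hC _ (hu' x)⟩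
  simp only [mulVec, dotProduct]
  exact .sum fun j => ((hentries.eval i).eval j).mul (hv.eval j)

lemma exists_sq_mulVec_sub_le (C : ℝ) :
    ∃ K, 0 ≤ K ∧ ∀ a ∈ stateSpace, ∀ b ∈ stateSpace, ∀ v : Fin 2 → ℝ, ‖v‖ ≤ C → ∀ i,
      ((SigmaBC a *ᵥ v) i - (SigmaBC b *ᵥ v) i) ^ 2 ≤ K * ∑ j, (a j - b j) ^ 2 := by
  obtain ⟨L, hL⟩ := (contDiff_entries (n := 1)).contDiffOn.exists_lipschitzOnWith one_ne_zero
    (convex_Icc _ _) isCompact_Icc (s := stateSpace)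
  refine ⟨(2 * L * C) ^ 2, sq_nonneg _, fun a ha b hb v hv i => ?_⟩
  have hentry (j : Fin 2) : |SigmaBC a i j - SigmaBC b i j| ≤ L * ‖a - b‖ :=
    (norm_le_pi_norm _ j).trans <| (norm_le_pi_norm _ i).trans (hL.norm_sub_le ha hb)
  have hrow : |(SigmaBC a *ᵥ v) i - (SigmaBC b *ᵥ v) i| ≤ 2 * L * C * ‖a - b‖ := by
    calc |(SigmaBC a *ᵥ v) i - (SigmaBC b *ᵥ v) i|
        = |∑ j, (SigmaBC a i j - SigmaBC b i j) * v j| := by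
          simp only [mulVec, dotProduct, sub_mul, Finset.sum_sub_distrib]
      _ ≤ ∑ _ : Fin 2, L * ‖a - b‖ * C := by
          refine Finset.abs_sum_le_sum_abs _ _ |>.trans (Finset.sum_le_sum fun j _ => ?_)
          rw [abs_mul]
          exact mul_le_mul (hentry j) ((norm_le_pi_norm v j).trans hv) (abs_nonneg _)
            (by positivity)
      _ = 2 * L * C * ‖a - b‖ := by
          rw [Fin.sum_const, nsmul_eq_mul]
          push_cast
          ring
  calc ((SigmaBC a *ᵥ v) i - (SigmaBC b *ᵥ v) i) ^ 2
      ≤ (2 * L * C * ‖a - b‖) ^ 2 := sq_le_sq.2 (hrow.trans (le_abs_self _))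
    _ ≤ (2 * L * C) ^ 2 * ∑ j, (a j - b j) ^ 2 := by
        rw [mul_pow]
        exact mul_le_mul_of_nonneg_left (sq_norm_le_sum_sq (a - b)) (sq_nonneg _)

end SigmaBC

end Mobility

namespace cylDomain

variable {d : ℕ}

lemma subset_Icc (d : ℕ) : cylDomain d ⊆ Icc (fun _ => -1) fun _ => 1 := by
  rintro x ⟨hleft, hright, htorus⟩
  refine ⟨fun i => ?_, fun i => ?_⟩ <;> rcases eq_or_ne i 0 with rfl | hi
  · exact hleft.le
  · exact neg_one_lt_zero.le.trans (htorus i hi).1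
  · exact hright.le
  · exact (htorus i hi).2.le

lemma volume_restrict_Ioo_prod (T : ℝ) :
    volume.restrict (Ioo 0 T ×ˢ cylDomain d) =
      (volume.restrict (Ioo 0 T)).prod (volume.restrict (cylDomain d)) := by
  rw [Measure.prod_restrict, Measure.volume_eq_prod]

lemma measurableSet_Ioo_prod (T : ℝ) : MeasurableSet (Ioo 0 T ×ˢ cylDomain d) :=
  measurableSet_Ioo.prod measurableSet_cylDomain

end cylDomain

/-! ### The weak formulation -/

section WeakFormulation

variable {d : ℕ} {T : ℝ} {E : Fin (d + 1) → Fin 2 → ℝ} {H : ℝ → (Fin (d + 1) → ℝ) → Fin 2 → ℝ}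

/-- The field `½ (Ê + 2 ∇Ĥ)` in the spatial direction `k`, so that the equation reads
`∂ₜ ρ̂ = Δ ρ̂ - ∑ₖ ∂ₖ (Σ(ρ̂) drift k)`. -/
noncomputable def drift (E : Fin (d + 1) → Fin 2 → ℝ) (H : ℝ → (Fin (d + 1) → ℝ) → Fin 2 → ℝ)
    (k : Fin (d + 1)) (p : ℝ × (Fin (d + 1) → ℝ)) : Fin 2 → ℝ :=
  fun j => E k j / 2 + fderiv ℝ (fun y => H p.1 y j) p.2 (Pi.single k 1)

lemma continuous_drift (hH : ContDiff ℝ 1 fun p : ℝ × (Fin (d + 1) → ℝ) => H p.1 p.2)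
    (k : Fin (d + 1)) : Continuous (drift E H k) := by
  refine continuous_pi fun j => continuous_const.add ?_
  have hHj : ContDiff ℝ 1 fun q : (ℝ × (Fin (d + 1) → ℝ)) × (Fin (d + 1) → ℝ) => H q.1.1 q.2 j :=
    (contDiff_pi.1 hH j).comp ((contDiff_fst.comp contDiff_fst).prodMk contDiff_snd)
  have hderiv : ContDiff ℝ 0 fun p : ℝ × (Fin (d + 1) → ℝ) =>
      fderiv ℝ (fun y => H p.1 y j) p.2 :=
    ContDiff.fderiv (f := fun p y => H p.1 y j) hHj contDiff_snd (by norm_num)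
  exact hderiv.continuous.clm_apply continuous_const

/-- `drift` set to zero outside `(0,T) × Λ`, which makes it globally bounded. -/
noncomputable def cutoffDrift (T : ℝ) (E : Fin (d + 1) → Fin 2 → ℝ)
    (H : ℝ → (Fin (d + 1) → ℝ) → Fin 2 → ℝ) (k : Fin (d + 1)) :
    ℝ × (Fin (d + 1) → ℝ) → Fin 2 → ℝ :=
  (Ioo 0 T ×ˢ cylDomain d).indicator (drift E H k)

lemma bddMeasurable_cutoffDrift
    (hH : ContDiff ℝ 1 fun p : ℝ × (Fin (d + 1) → ℝ) => H p.1 p.2) (k : Fin (d + 1)) :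
    BddMeasurable (cutoffDrift T E H k) := by
  have hcont : Continuous (drift E H k) := continuous_drift hH k
  obtain ⟨C, hC⟩ := (isCompact_Icc.prod isCompact_Icc).exists_bound_of_continuousOn
    hcont.continuousOn (s := Icc 0 T ×ˢ Icc (fun _ => -1) fun _ => 1)
  refine ⟨hcont.measurable.indicator (cylDomain.measurableSet_Ioo_prod T), max C 0, fun p => ?_⟩
  by_cases hp : p ∈ Ioo 0 T ×ˢ cylDomain d
  · rw [cutoffDrift, indicator_of_mem hp]
    exact (hC p (prod_mono Ioo_subset_Icc_self (cylDomain.subset_Icc d) hp)).trans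
      (le_max_left C 0)
  · rw [cutoffDrift, indicator_of_notMem hp, norm_zero]
    exact le_max_right C 0

/-- The `i`-th component, in the spatial direction `k`, of the transport part `½ Σ(ρ̂) (Ê + 2 ∇Ĥ)`
of the current, set to zero outside `(0,T) × Λ`. -/
noncomputable def transportFlux (T : ℝ) (E : Fin (d + 1) → Fin 2 → ℝ)
    (H ρ : ℝ → (Fin (d + 1) → ℝ) → Fin 2 → ℝ) (i : Fin 2) (k : Fin (d + 1))
    (p : ℝ × (Fin (d + 1) → ℝ)) : ℝ :=
  (SigmaBC (ρ p.1 p.2) *ᵥ cutoffDrift T E H k p) i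

/-- The space-time integrals in the weak formulation that involve the solution `ρ` in the interior
of `Λ`, taken with the sign that makes `ρ ∂ₜ G` appear positively. -/
noncomputable def interiorPairing (T : ℝ) (E : Fin (d + 1) → Fin 2 → ℝ)
    (H ρ G : ℝ → (Fin (d + 1) → ℝ) → Fin 2 → ℝ) : ℝ :=
  (∫ p in Ioo 0 T ×ˢ cylDomain d, ∑ i, ρ p.1 p.2 i * deriv (fun s => G s p.2 i) p.1) +
  (∫ p in Ioo 0 T ×ˢ cylDomain d, ∑ i, ρ p.1 p.2 i *
    ∑ k, fderiv ℝ (fun y => fderiv ℝ (fun z => G p.1 z i) y (Pi.single k 1)) p.2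
      (Pi.single k 1)) +
  (1 / 2) * ∫ p in Ioo 0 T ×ˢ cylDomain d,
    ∑ k, (fun i => fderiv ℝ (fun y => G p.1 y i) p.2 (Pi.single k 1)) ⬝ᵥ
      SigmaBC (ρ p.1 p.2) *ᵥ fun i =>
        E k i + 2 * fderiv ℝ (fun y => H p.1 y i) p.2 (Pi.single k 1)

/-- The test function `φ(t) v(x)` in the component `i` and zero in the other one. -/
noncomputable def separatedTest (φ : ℝ → ℝ) (v : (Fin (d + 1) → ℝ) → ℝ) (i : Fin 2) (t : ℝ)
    (x : Fin (d + 1) → ℝ) (j : Fin 2) : ℝ :=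
  (Pi.single i 1 : Fin 2 → ℝ) j * φ t * v x

section SeparatedTest

variable (φ : ℝ → ℝ) {v : (Fin (d + 1) → ℝ) → ℝ} (i j : Fin 2) (t : ℝ) (x : Fin (d + 1) → ℝ)

lemma deriv_separatedTest :
    deriv (fun s => separatedTest φ v i s x j) t =
      (Pi.single i 1 : Fin 2 → ℝ) j * (deriv φ t * v x) := by
  simp only [separatedTest, deriv_mul_const_field, deriv_const_mul_field, mul_assoc]

lemma fderiv_separatedTest (hv : Differentiable ℝ v) (u : Fin (d + 1) → ℝ) :
    fderiv ℝ (fun y => separatedTest φ v i t y j) x u =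
      (Pi.single i 1 : Fin 2 → ℝ) j * (φ t * fderiv ℝ v x u) := by
  simp only [separatedTest]
  rw [fderiv_const_mul (hv x), _root_.smul_apply, smul_eq_mul, mul_assoc]

lemma fderiv_fderiv_separatedTest (hv : ContDiff ℝ 2 v) (u : Fin (d + 1) → ℝ) :
    fderiv ℝ (fun y => fderiv ℝ (fun z => separatedTest φ v i t z j) y u) x u =
      (Pi.single i 1 : Fin 2 → ℝ) j * (φ t * fderiv ℝ (fun y => fderiv ℝ v y u) x u) := by
  have hderiv : Differentiable ℝ fun y => fderiv ℝ v y u :=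
    ((hv.fderiv_right (m := 1) le_rfl).differentiable one_ne_zero).clm_apply
      (differentiable_const u)
  simp only [fderiv_separatedTest φ i j t _ (hv.differentiable two_ne_zero), ← mul_assoc]
  rw [fderiv_const_mul (hderiv x), _root_.smul_apply, smul_eq_mul]

end SeparatedTest

lemma interiorPairing_separatedTest (ρ : ℝ → (Fin (d + 1) → ℝ) → Fin 2 → ℝ) (φ : ℝ → ℝ)
    {v : (Fin (d + 1) → ℝ) → ℝ} (hv : ContDiff ℝ 2 v) (i : Fin 2) :
    interiorPairing T E H ρ (separatedTest φ v i) =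
      (∫ p in Ioo 0 T ×ˢ cylDomain d, ρ p.1 p.2 i * (deriv φ p.1 * v p.2)) +
      (∫ p in Ioo 0 T ×ˢ cylDomain d, ρ p.1 p.2 i *
        ∑ k, φ p.1 * fderiv ℝ (fun y => fderiv ℝ v y (Pi.single k 1)) p.2 (Pi.single k 1)) +
      ∫ p in Ioo 0 T ×ˢ cylDomain d,
        ∑ k, transportFlux T E H ρ i k p * (φ p.1 * fderiv ℝ v p.2 (Pi.single k 1)) := by
  have hcomponent (c : ℝ) (u : Fin 2 → ℝ) :
      (fun j => (Pi.single i 1 : Fin 2 → ℝ) j * c) ⬝ᵥ u = c * u i := by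
    simp [dotProduct, Pi.single_apply]
  have hflux (p : ℝ × (Fin (d + 1) → ℝ)) (hp : p ∈ Ioo 0 T ×ˢ cylDomain d) (k : Fin (d + 1)) :
      (SigmaBC (ρ p.1 p.2) *ᵥ fun j =>
        E k j + 2 * fderiv ℝ (fun y => H p.1 y j) p.2 (Pi.single k 1)) i =
          2 * transportFlux T E H ρ i k p := by
    have hdrift : (fun j => E k j + 2 * fderiv ℝ (fun y => H p.1 y j) p.2 (Pi.single k 1)) =
        (2 : ℝ) • cutoffDrift T E H k p := by
      ext j
      rw [cutoffDrift, indicator_of_mem hp, Pi.smul_apply, drift, smul_eq_mul]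
      ring
    rw [hdrift, mulVec_smul, Pi.smul_apply, smul_eq_mul, transportFlux]
  rw [interiorPairing, ← integral_const_mul]
  congr 1
  · congr 1 <;> refine integral_congr_ae (.of_forall fun p => ?_)
    · simp [deriv_separatedTest, Pi.single_apply]
    · simp [fderiv_fderiv_separatedTest φ i _ _ _ hv, Pi.single_apply]
  · refine setIntegral_congr_fun (cylDomain.measurableSet_Ioo_prod T) fun p hp => ?_
    simp only [fderiv_separatedTest φ i _ _ _ (hv.differentiable two_ne_zero), hcomponent,
      hflux p hp, Finset.mul_sum]
    exact Finset.sum_congr rfl fun k _ => by ring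

lemma testBdry_separatedTest {φ : ℝ → ℝ} (hφ : ContDiff ℝ 2 φ) (n : Fin (d + 1) → ℤ) (δ : ℝ)
    (i : Fin 2) : TestBdry d (separatedTest φ (cylDomain.mode n δ) i) := by
  refine ⟨contDiff_pi.2 fun j => ?_, fun t x k hk => ?_, fun t x hx => ?_⟩
  · exact (contDiff_const.mul (hφ.comp contDiff_fst)).mul
      ((cylDomain.contDiff_mode n δ).comp contDiff_snd)
  · ext j
    simp only [separatedTest, cylDomain.mode, cylDomain.phaseMode_add_single n _ δ x hk]
  · ext j
    rw [separatedTest, cylDomain.mode_eq_zero_of_left n δ hx, mul_zero, Pi.zero_apply]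

namespace IsWeakSolutionBC

variable {b γ : (Fin (d + 1) → ℝ) → Fin 2 → ℝ} {ρ : ℝ → (Fin (d + 1) → ℝ) → Fin 2 → ℝ}
  {g : Fin (d + 1) → ℝ → (Fin (d + 1) → ℝ) → Fin 2 → ℝ}
  {τ : ℝ → (Fin (d + 1) → ℝ) → Fin 2 → ℝ}

lemma mem_stateSpace (h : IsWeakSolutionBC d T E H b γ ρ g τ) (p : ℝ × (Fin (d + 1) → ℝ)) :
    ρ p.1 p.2 ∈ stateSpace :=
  mem_stateSpace_iff.2 (h.2.1 p.1 p.2)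

lemma bddMeasurable (h : IsWeakSolutionBC d T E H b γ ρ g τ) :
    BddMeasurable fun p : ℝ × (Fin (d + 1) → ℝ) => ρ p.1 p.2 :=
  ⟨h.1, 1, fun p => norm_le_one_of_mem_stateSpace (h.mem_stateSpace p)⟩

lemma bddMeasurable_transportFlux (h : IsWeakSolutionBC d T E H b γ ρ g τ)
    (hH : ContDiff ℝ 1 fun p : ℝ × (Fin (d + 1) → ℝ) => H p.1 p.2) (i : Fin 2)
    (k : Fin (d + 1)) : BddMeasurable (transportFlux T E H ρ i k) :=
  SigmaBC.bddMeasurable_mulVec h.1 h.mem_stateSpace (bddMeasurable_cutoffDrift hH k) i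

/- The right-hand side does not involve `ρ`: the terms of the weak formulation at time `T` and on
`Γ⁺` vanish for these test functions. -/
lemma interiorPairing_eq (h : IsWeakSolutionBC d T E H b γ ρ g τ)
    {G : ℝ → (Fin (d + 1) → ℝ) → Fin 2 → ℝ} (hG : TestBdry d G) (hGT : ∀ x, G T x = 0)
    (hright : ∀ t x i, x 0 = 1 → fderiv ℝ (fun y => G t y i) x (Pi.single 0 1) = 0) :
    interiorPairing T E H ρ G =
      -(∫ x in cylDomain d, ∑ i, γ x i * G 0 x i) -
        (1 / 2) * ∫ p in Ioo 0 T ×ˢ cylDomain d, ∑ i, b p.2 i *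
          fderiv ℝ (fun y => G p.1 y i) (Function.update p.2 0 (-1)) (Pi.single 0 1) := by
  obtain ⟨-, -, -, -, -, -, -, -, hweak⟩ := h
  have hfinal (x : Fin (d + 1) → ℝ) (i : Fin 2) : G T x i = 0 := congrFun (hGT x) i
  have htrace (p : ℝ × (Fin (d + 1) → ℝ)) (i : Fin 2) :
      fderiv ℝ (fun y => G p.1 y i) (Function.update p.2 0 1) (Pi.single 0 1) = 0 :=
    hright _ _ _ (Function.update_self ..)
  have hGweak := hweak G hG
  simp only [hfinal, htrace, mul_zero, Finset.sum_const_zero, integral_zero] at hGweak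
  rw [interiorPairing]
  linarith

lemma interiorPairing_separatedTest_mode (h : IsWeakSolutionBC d T E H b γ ρ g τ)
    (hH : ContDiff ℝ 1 fun p : ℝ × (Fin (d + 1) → ℝ) => H p.1 p.2) {φ : ℝ → ℝ}
    (hφ : ContDiff ℝ 2 φ) (m : (Fin (d + 1) → ℤ) × Fin 2) (i : Fin 2) :
    interiorPairing T E H ρ
        (separatedTest φ (cylDomain.mode m.1 (cylDomain.parityPhase m.2)) i) =
      ∫ p, (cylDomain.eigensystem d).modeDensity (fun p => ρ p.1 p.2 i)
        (transportFlux T E H ρ i) m φ p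
        ∂(volume.restrict (Ioo 0 T)).prod (volume.restrict (cylDomain d)) := by
  have hlaplace (p : ℝ × (Fin (d + 1) → ℝ)) :
      ∑ k, φ p.1 *
          -(cylDomain.freq m.1 k ^ 2 * cylDomain.mode m.1 (cylDomain.parityPhase m.2) p.2) =
        -((cylDomain.eigensystem d).eigenvalue m * φ p.1) *
          cylDomain.mode m.1 (cylDomain.parityPhase m.2) p.2 := by
    rw [← Finset.mul_sum, Finset.sum_neg_distrib, ← Finset.sum_mul,
      GradientEigensystem.eigenvalue, cylDomain.eigensystem]
    ring
  rw [GradientEigensystem.integral_modeDensity_eq_add (h.bddMeasurable.eval i)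
    (h.bddMeasurable_transportFlux hH i) m hφ, ← cylDomain.volume_restrict_Ioo_prod,
    interiorPairing_separatedTest ρ φ (cylDomain.contDiff_mode _ _) i]
  simp only [cylDomain.fderiv_fderiv_mode, hlaplace]
  simp only [cylDomain.fderiv_mode]
  rfl

lemma isModewiseSolution_sub (hH : ContDiff ℝ 1 fun p : ℝ × (Fin (d + 1) → ℝ) => H p.1 p.2)
    {ρ₁ ρ₂ : ℝ → (Fin (d + 1) → ℝ) → Fin 2 → ℝ}
    {g₁ g₂ : Fin (d + 1) → ℝ → (Fin (d + 1) → ℝ) → Fin 2 → ℝ}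
    {τ₁ τ₂ : ℝ → (Fin (d + 1) → ℝ) → Fin 2 → ℝ}
    (h₁ : IsWeakSolutionBC d T E H b γ ρ₁ g₁ τ₁) (h₂ : IsWeakSolutionBC d T E H b γ ρ₂ g₂ τ₂)
    (i : Fin 2) :
    (cylDomain.eigensystem d).IsModewiseSolution 0 T (fun p => ρ₁ p.1 p.2 i - ρ₂ p.1 p.2 i)
      fun k p => transportFlux T E H ρ₁ i k p - transportFlux T E H ρ₂ i k p := by
  refine GradientEigensystem.isModewiseSolution_sub (h₁.bddMeasurable.eval i)
    (h₁.bddMeasurable_transportFlux hH i) (h₂.bddMeasurable.eval i)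
    (h₂.bddMeasurable_transportFlux hH i) fun m φ hφ hφT => ?_
  have htest := testBdry_separatedTest hφ m.1 (cylDomain.parityPhase m.2) i
  have hfinal (x : Fin (d + 1) → ℝ) :
      separatedTest φ (cylDomain.mode m.1 (cylDomain.parityPhase m.2)) i T x = 0 := by
    ext j
    rw [separatedTest, hφT, mul_zero, zero_mul, Pi.zero_apply]
  have hright (t : ℝ) (x : Fin (d + 1) → ℝ) (j : Fin 2) (hx : x 0 = 1) :
      fderiv ℝ (fun y => separatedTest φ (cylDomain.mode m.1 (cylDomain.parityPhase m.2)) i t y j)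
        x (Pi.single 0 1) = 0 := by
    rw [fderiv_separatedTest _ _ _ _ _
      ((cylDomain.contDiff_mode _ _).differentiable one_ne_zero), cylDomain.fderiv_mode,
      cylDomain.gradMode_zero_eq_zero_of_right _ _ hx, mul_zero, mul_zero, mul_zero]
  rw [← h₁.interiorPairing_separatedTest_mode hH hφ, ← h₂.interiorPairing_separatedTest_mode hH hφ,
    h₁.interiorPairing_eq htest hfinal hright, h₂.interiorPairing_eq htest hfinal hright]

end IsWeakSolutionBC

end WeakFormulation

theorem stmt_19_general (d : ℕ) (T : ℝ) (E : Fin (d + 1) → Fin 2 → ℝ)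
    (H : ℝ → (Fin (d + 1) → ℝ) → Fin 2 → ℝ)
    (hH : ContDiff ℝ 1 fun p : ℝ × (Fin (d + 1) → ℝ) => H p.1 p.2)
    (b γ : (Fin (d + 1) → ℝ) → Fin 2 → ℝ) (ρ₁ ρ₂ : ℝ → (Fin (d + 1) → ℝ) → Fin 2 → ℝ)
    (g₁ g₂ : Fin (d + 1) → ℝ → (Fin (d + 1) → ℝ) → Fin 2 → ℝ)
    (τ₁ τ₂ : ℝ → (Fin (d + 1) → ℝ) → Fin 2 → ℝ)
    (h₁ : IsWeakSolutionBC d T E H b γ ρ₁ g₁ τ₁) (h₂ : IsWeakSolutionBC d T E H b γ ρ₂ g₂ τ₂) :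
    ∀ᵐ p : ℝ × (Fin (d + 1) → ℝ) ∂volume.restrict (Ioo 0 T ×ˢ cylDomain d),
      ρ₁ p.1 p.2 = ρ₂ p.1 p.2 := by
  choose C hC using fun k => (bddMeasurable_cutoffDrift (T := T) (E := E) hH k).bounded
  choose K hK hlip using fun k => SigmaBC.exists_sq_mulVec_sub_le (C k)
  have hzero := GradientEigensystem.IsModewiseSolution.ae_eq_zero (K := ∑ k, K k)
    (IsWeakSolutionBC.isModewiseSolution_sub hH h₁ h₂)
    (fun i => (h₁.bddMeasurable.eval i).sub (h₂.bddMeasurable.eval i))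
    (fun i k => (h₁.bddMeasurable_transportFlux hH i k).sub
      (h₂.bddMeasurable_transportFlux hH i k))
    (Finset.sum_nonneg fun k _ => hK k) fun i k p => ?_
  · rw [cylDomain.volume_restrict_Ioo_prod]
    filter_upwards [hzero] with p hp
    exact funext fun i => sub_eq_zero.1 (hp i)
  · have hKk : K k ≤ ∑ k, K k := Finset.single_le_sum (fun k _ => hK k) (Finset.mem_univ k)
    exact (hlip k _ (h₁.mem_stateSpace p) _ (h₂.mem_stateSpace p) _ (hC k p) i).trans
      (mul_le_mul_of_nonneg_right hKk (Finset.sum_nonneg fun j _ => sq_nonneg _))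

/-- Uniqueness of weak solutions of the coupled parabolic system with mixed
Dirichlet–Neumann boundary conditions and weak asymmetry `Ê`, perturbed by a
smooth field `Ĥ` vanishing on `Γ⁻`: two weak solutions with the same boundary
data `b̂` and initial data `γ̂` coincide a.e. on `[0,T] × Λ`. -/
theorem stmt_19 (d : ℕ) (T : ℝ) (hT : 0 < T)
    (E : Fin (d + 1) → Fin 2 → ℝ)
    (H : ℝ → (Fin (d + 1) → ℝ) → Fin 2 → ℝ) (hH : TestBdry d H)
    (b γ : (Fin (d + 1) → ℝ) → Fin 2 → ℝ)
    (hb0 : ∀ (x : Fin (d + 1) → ℝ) (c : ℝ), b (Function.update x 0 c) = b x)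
    (hbI : ∀ x, |b x 0| < b x 1 ∧ b x 1 < 1)
    (ρ₁ ρ₂ : ℝ → (Fin (d + 1) → ℝ) → Fin 2 → ℝ)
    (g₁ g₂ : Fin (d + 1) → ℝ → (Fin (d + 1) → ℝ) → Fin 2 → ℝ)
    (τ₁ τ₂ : ℝ → (Fin (d + 1) → ℝ) → Fin 2 → ℝ)
    (h₁ : IsWeakSolutionBC d T E H b γ ρ₁ g₁ τ₁)
    (h₂ : IsWeakSolutionBC d T E H b γ ρ₂ g₂ τ₂) :
    ∀ᵐ p ∂(volume.restrict (Set.Ioo 0 T ×ˢ cylDomain d)),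
      ρ₁ (p : ℝ × (Fin (d + 1) → ℝ)).1 p.2 = ρ₂ p.1 p.2 := by
  exact stmt_19_general d T E H (hH.1.of_le one_le_two) b γ ρ₁ ρ₂ g₁ g₂ τ₁ τ₂ h₁ h₂
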